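/- (Relative Karrass–Pietrowski–Solitar theorem.) Let φ : H → Out(A) be a monomorphism with H finite, and let A = A_1 ∗ ⋯ ∗ A_n ∗ B be a decomposition preserved by H, with each A_i finitely generated, nontrivial and torsion-free, and B a (possibly trivial) finitely generated free group. Let A_1, …, A_m be the minimal factors, and let Ā be the preimage of φ(H) in Aut(A). Then there is a tree T on which Ā acts without inversions with finitely many orbits of vertices and finitely many orbits of edges, with every edge stabilizer finite, together with vertices v_1, …, v_m of T lying in pairwise distinct Ā-orbits, such that for each i ≤ m: the stabilizer Stab_Ā(v_i) contains A_i, the intersection Stab_Ā(v_i) ∩ A equals A_i, and the image of Stab_Ā(v_i) under the projection Ā → H is Stab_H(i); moreover every vertex of T not in the Ā-orbit of some v_i has finite stabilizer. -/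

import Mathlib

/-! # Relative Karrass–Pietrowski–Solitar theorem (Hensel–Kielak) -/

variable (A : Type*) [Group A]

/-- The subgroup of inner automorphisms of `A`, inside `MulAut A`. -/
abbrev Inn : Subgroup (MulAut A) := (MulAut.conj (G := A)).range

instance Inn_normal : (Inn A).Normal := by
  constructor
  rintro x ⟨a, rfl⟩ f
  exact ⟨f a, by ext x; simp [mul_assoc]⟩

/-- The outer automorphism group of `A`. -/
abbrev OutG := MulAut A ⧸ Inn A

/-- The canonical projection `Aut(A) → Out(A)`. -/
abbrev toOut : MulAut A →* OutG A := QuotientGroup.mk' (Inn A)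

/-!
Whether the reduced word of an element of `A` starts with a letter in a given factor, or with a
positive power of a given basis element of `B`, changes under right multiplication by a fixed
element for only finitely many elements. So these sets extend to cuts with finite boundary in the
Cayley graph of `Ā` with the conjugates of the `Aᵢ` coned off. By an argument of Dunwoody such cuts
are determined by finitely many orbits of pairwise nested bonds, namely bonds which are not
determined by smaller ones. Up to complements, these bonds are the edges of a tree `T`, whose
vertices are the orientations.

An infinite vertex stabilizer contains some `a ≠ 1` in `A`. Since edge stabilizers are finite, no
cut determined by the bonds separates all positive powers of an infinite order element fixing a
vertex from all negative ones. But the given cuts do so for the powers of some conjugate of `a`,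
unless `a` is conjugate into some `Aᵢ` and so fixes a cone point. Then the vertex is the orientation
towards this cone point. The cuts also separate the cone points, whence the stabilizer of the vertex
`vᵢ` is the stabilizer of `Aᵢ` itself.
-/

open scoped Pointwise

/-! ### Reduced words in free products -/

/-- `A` is the internal free product of the family of subgroups `L`: the canonical homomorphism
from the abstract free product to `A` is an isomorphism. -/
def IsInternalFreeProduct {A ι : Type*} [Group A] (L : ι → Subgroup A) : Prop :=
  Function.Bijective (Monoid.CoprodI.lift fun i => (L i).subtype)

namespace IsInternalFreeProduct

section Words

open Monoid.CoprodI

variable {A ι : Type*} [Group A] {L : ι → Subgroup A} (hL : IsInternalFreeProduct L)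

/-- The canonical isomorphism from the abstract free product. -/
noncomputable def mulEquiv : Monoid.CoprodI (fun i => L i) ≃* A :=
  MulEquiv.ofBijective _ hL

open Classical in
/-- The reduced word of an element, with letters in the factors. -/
noncomputable def word (a : A) : Word fun i => L i :=
  Word.equiv (hL.mulEquiv.symm a)

/-- The first letter of the reduced word of an element, with the index of its factor. -/
noncomputable def firstLetter (a : A) : Option (ι × A) :=
  (hL.word a).toList.head?.map fun p => (p.1, (p.2 : A))

/-- The number of letters of the reduced word of an element. -/
noncomputable def wordLength (a : A) : ℕ :=
  (hL.word a).toList.length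

/-- The reduced word of `a` starts with a letter of `L i`. -/
def Starts (a : A) (i : ι) : Prop :=
  ∃ m, hL.firstLetter a = some (i, m)

theorem mulEquiv_of {i : ι} (m : L i) : hL.mulEquiv (of (M := fun i => L i) m) = m :=
  lift_of (fun i => (L i).subtype) m

open Classical in
theorem mulEquiv_prod_word (a : A) : hL.mulEquiv (hL.word a).prod = a := by
  have hprod : (hL.word a).prod = hL.mulEquiv.symm a := Word.equiv.symm_apply_apply _
  rw [hprod, MulEquiv.apply_symm_apply]

open Classical in
theorem word_mulEquiv_prod (v : Word fun i => L i) : hL.word (hL.mulEquiv v.prod) = v := by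
  rw [word, MulEquiv.symm_apply_apply]
  exact Word.equiv.apply_symm_apply v

theorem word_one : hL.word 1 = Word.empty := by
  simpa using hL.word_mulEquiv_prod Word.empty

theorem word_mul {i : ι} (m : L i) {a : A} (ha : (hL.word a).fstIdx ≠ some i) (hm : m ≠ 1) :
    hL.word (m * a) = Word.cons (M := fun i => L i) m (hL.word a) ha hm := by
  rw [← hL.word_mulEquiv_prod (Word.cons (M := fun i => L i) m (hL.word a) ha hm),
    Word.prod_cons, map_mul, hL.mulEquiv_of, hL.mulEquiv_prod_word]

theorem fstIdx_word_eq_iff {a : A} {i : ι} :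
    (hL.word a).fstIdx = some i ↔ hL.Starts a i := by
  simp [Word.fstIdx, Starts, firstLetter]

theorem firstLetter_one : hL.firstLetter 1 = none := by
  simp [firstLetter, hL.word_one, Word.empty]

theorem wordLength_one : hL.wordLength 1 = 0 := by
  simp [wordLength, hL.word_one, Word.empty]

theorem firstLetter_mul {i : ι} {m a : A} (hm : m ∈ L i) (hm1 : m ≠ 1) (ha : ¬ hL.Starts a i) :
    hL.firstLetter (m * a) = some (i, m) := by
  have hword := hL.word_mul ⟨m, hm⟩ (hL.fstIdx_word_eq_iff.not.2 ha) (by simpa using hm1)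
  simp_all [firstLetter, Word.cons]

theorem wordLength_mul {i : ι} {m a : A} (hm : m ∈ L i) (hm1 : m ≠ 1) (ha : ¬ hL.Starts a i) :
    hL.wordLength (m * a) = hL.wordLength a + 1 := by
  have hword := hL.word_mul ⟨m, hm⟩ (hL.fstIdx_word_eq_iff.not.2 ha) (by simpa using hm1)
  simp_all [wordLength, Word.cons]

theorem exists_eq_mul {a : A} (ha : a ≠ 1) :
    ∃ i m a', m ∈ L i ∧ m ≠ 1 ∧ ¬ hL.Starts a' i ∧ a = m * a' := by
  obtain ⟨v, rfl⟩ : ∃ v, hL.mulEquiv (Word.prod v) = a := ⟨_, hL.mulEquiv_prod_word a⟩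
  cases v using Word.consRecOn with
  | empty => simp at ha
  | cons i m v hv hm =>
    refine ⟨i, m, hL.mulEquiv v.prod, m.2, by simpa using hm, ?_, ?_⟩
    · rwa [← hL.fstIdx_word_eq_iff, hL.word_mulEquiv_prod]
    · rw [Word.prod_cons, map_mul, hL.mulEquiv_of]

end Words

section Letters

variable {A ι : Type*} [Group A] {L : ι → Subgroup A}

section

variable {hL : IsInternalFreeProduct L}

theorem Starts.unique {a : A} {i j : ι} (hi : hL.Starts a i) (hj : hL.Starts a j) : i = j := by
  obtain ⟨m, hm⟩ := hi
  obtain ⟨m', hm'⟩ := hj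
  simpa using congrArg (Option.map Prod.fst) (hm.symm.trans hm')

theorem starts_congr {a b : A} (h : hL.firstLetter a = hL.firstLetter b) {i : ι} :
    hL.Starts a i ↔ hL.Starts b i := by
  rw [Starts, Starts, h]

end

variable (hL : IsInternalFreeProduct L)

theorem not_starts_one (i : ι) : ¬ hL.Starts 1 i := by
  simp [Starts, hL.firstLetter_one]

theorem firstLetter_of_mem {i : ι} {m : A} (hm : m ∈ L i) (hm1 : m ≠ 1) :
    hL.firstLetter m = some (i, m) := by
  simpa using hL.firstLetter_mul hm hm1 (hL.not_starts_one i)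

theorem starts_of_mem {i : ι} {m : A} (hm : m ∈ L i) (hm1 : m ≠ 1) : hL.Starts m i :=
  ⟨m, hL.firstLetter_of_mem hm hm1⟩

theorem notMem_of_not_starts {i : ι} {a : A} (ha : ¬ hL.Starts a i) (ha1 : a ≠ 1) : a ∉ L i :=
  fun h => ha (hL.starts_of_mem h ha1)

theorem exists_starts {a : A} (ha : a ≠ 1) : ∃ i, hL.Starts a i := by
  obtain ⟨i, m, a', hm, hm1, ha', rfl⟩ := hL.exists_eq_mul ha
  exact ⟨i, m, hL.firstLetter_mul hm hm1 ha'⟩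

theorem exists_eq_mul_of_firstLetter_eq {a : A} {i : ι} {m : A}
    (h : hL.firstLetter a = some (i, m)) :
    m ∈ L i ∧ m ≠ 1 ∧
      ∃ a', ¬ hL.Starts a' i ∧ a = m * a' ∧ hL.wordLength a = hL.wordLength a' + 1 := by
  obtain ⟨j, m', a', hm, hm1, ha', rfl⟩ := hL.exists_eq_mul (a := a) (by
    rintro rfl; simp [hL.firstLetter_one] at h)
  obtain ⟨rfl, rfl⟩ : j = i ∧ m' = m := by
    simpa [hL.firstLetter_mul hm hm1 ha'] using h
  exact ⟨hm, hm1, a', ha', rfl, hL.wordLength_mul hm hm1 ha'⟩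

theorem word_induction {p : A → Prop} (one : p 1)
    (mul : ∀ i m a, m ∈ L i → m ≠ 1 → ¬ hL.Starts a i → p a → p (m * a)) (a : A) : p a := by
  induction hn : hL.wordLength a using Nat.strong_induction_on generalizing a with
  | _ n ih =>
    by_cases ha : a = 1
    · rwa [ha]
    obtain ⟨i, m, h⟩ := hL.exists_starts ha
    obtain ⟨hm, hm1, a', ha', rfl, hlen⟩ := hL.exists_eq_mul_of_firstLetter_eq h
    exact mul i m a' hm hm1 ha' (ih (hL.wordLength a') (by lia) a' rfl)

theorem firstLetter_mul_right {j : ι} {y b : A} (hy : y ∉ L j) (hb : b ∈ L j) :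
    hL.firstLetter (y * b) = hL.firstLetter y := by
  induction y using hL.word_induction with
  | one => exact absurd (L j).one_mem hy
  | mul i m a hm hm1 ha ih =>
    rw [hL.firstLetter_mul hm hm1 ha, mul_assoc, hL.firstLetter_mul hm hm1]
    by_cases haj : a ∈ L j
    · have hij : i ≠ j := by
        rintro rfl
        exact hy (mul_mem hm haj)
      by_cases hab : a * b = 1
      · exact hab ▸ hL.not_starts_one i
      · exact fun h => hij (h.unique (hL.starts_of_mem (mul_mem haj hb) hab))
    · rwa [starts_congr (ih haj)]

theorem firstLetter_conj_and_notMem {j : ι} {v k : A} (hv : v ∉ L j) (hk : k ∈ L j) (hk1 : k ≠ 1) :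
    hL.firstLetter (v * k * v⁻¹) = hL.firstLetter v ∧ ∀ i, v * k * v⁻¹ ∉ L i := by
  induction v using hL.word_induction with
  | one => exact absurd (L j).one_mem hv
  | mul i m a hm hm1 ha ih =>
    set q := a * k * a⁻¹ with hq
    have hconj : m * a * k * (m * a)⁻¹ = m * (q * m⁻¹) := by rw [hq]; group
    have hq1 : q ≠ 1 := by rwa [hq, Ne, conj_eq_one_iff]
    have hqs : ¬ hL.Starts q i := by
      by_cases haj : a ∈ L j
      · intro hs
        obtain rfl := hs.unique (hL.starts_of_mem (mul_mem (mul_mem haj hk) (inv_mem haj)) hq1)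
        exact hv (mul_mem hm haj)
      · rwa [starts_congr (ih haj).1]
    have hqi : q ∉ L i := hL.notMem_of_not_starts hqs hq1
    have hfirst : hL.firstLetter (m * (q * m⁻¹)) = some (i, m) := by
      rw [hL.firstLetter_mul hm hm1]
      rwa [starts_congr (hL.firstLetter_mul_right hqi (inv_mem hm))]
    refine ⟨by rw [hconj, hfirst, hL.firstLetter_mul hm hm1 ha], fun i' h => hqi ?_⟩
    have hne : m * a * k * (m * a)⁻¹ ≠ 1 := by rwa [Ne, conj_eq_one_iff]
    rw [hconj] at h hne
    obtain rfl : i = i' := Starts.unique ⟨m, hfirst⟩ (hL.starts_of_mem h hne)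
    simpa [mul_assoc] using mul_mem (mul_mem (inv_mem hm) h) hm

theorem firstLetter_conj {j : ι} {v k : A} (hv : v ∉ L j) (hk : k ∈ L j) (hk1 : k ≠ 1) :
    hL.firstLetter (v * k * v⁻¹) = hL.firstLetter v :=
  (hL.firstLetter_conj_and_notMem hv hk hk1).1

theorem conj_notMem (hL : IsInternalFreeProduct L) {j : ι} {v k : A} (hv : v ∉ L j)
    (hk : k ∈ L j) (hk1 : k ≠ 1) (i : ι) : v * k * v⁻¹ ∉ L i :=
  (hL.firstLetter_conj_and_notMem hv hk hk1).2 i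

theorem firstLetter_mul_of_no_cancel {x y : A} (hx : x ≠ 1)
    (h : ∀ i, hL.Starts x⁻¹ i → ¬ hL.Starts y i) :
    hL.firstLetter (x * y) = hL.firstLetter x := by
  induction x using hL.word_induction with
  | one => exact absurd rfl hx
  | mul i m a hm hm1 ha ih =>
    rw [hL.firstLetter_mul hm hm1 ha, mul_assoc, hL.firstLetter_mul hm hm1]
    by_cases ha1 : a = 1
    · subst ha1
      rw [one_mul]
      exact h i (by simpa using hL.starts_of_mem (inv_mem hm) (inv_ne_one.2 hm1))
    · have hai : a⁻¹ ∉ L i := by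
        rw [inv_mem_iff]
        exact hL.notMem_of_not_starts ha ha1
      have hinv := hL.firstLetter_mul_right hai (inv_mem hm)
      rwa [starts_congr (ih ha1 fun j hj => h j (by rwa [mul_inv_rev, starts_congr hinv]))]

theorem starts_pow_succ {a : A} {i j : ι} (hi : hL.Starts a i) (hj : hL.Starts a⁻¹ j)
    (hij : i ≠ j) (n : ℕ) : hL.Starts (a ^ (n + 1)) i := by
  induction n with
  | zero => simpa
  | succ n ih =>
    rw [pow_succ', starts_congr (hL.firstLetter_mul_of_no_cancel _ _)]
    · exact hi
    · rintro rfl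
      exact hL.not_starts_one i hi
    · exact fun k hk hk' => hij ((ih.unique hk').trans (hk.unique hj))

theorem wordLength_mul_le_succ {i : ι} {m : A} (hm : m ∈ L i) (a : A) :
    hL.wordLength (m * a) ≤ hL.wordLength a + 1 := by
  by_cases hm1 : m = 1
  · simp [hm1]
  by_cases ha : hL.Starts a i
  · obtain ⟨m', h⟩ := ha
    obtain ⟨hm', -, a', ha', rfl, hlen⟩ := hL.exists_eq_mul_of_firstLetter_eq h
    rw [← mul_assoc]
    by_cases hmm : m * m' = 1
    · rw [hmm, one_mul]; lia
    · rw [hL.wordLength_mul (mul_mem hm hm') hmm ha']; lia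
  · rw [hL.wordLength_mul hm hm1 ha]

theorem wordLength_mul_le (a b : A) :
    hL.wordLength (a * b) ≤ hL.wordLength a + hL.wordLength b := by
  induction a using hL.word_induction with
  | one => simp
  | mul i m a hm hm1 ha ih =>
    rw [mul_assoc, hL.wordLength_mul hm hm1 ha]
    have := hL.wordLength_mul_le_succ hm (a * b)
    lia

theorem wordLength_le_one {i : ι} {m : A} (hm : m ∈ L i) : hL.wordLength m ≤ 1 := by
  simpa [hL.wordLength_one] using hL.wordLength_mul_le_succ hm 1

theorem wordLength_inv_le (a : A) : hL.wordLength a⁻¹ ≤ hL.wordLength a := by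
  induction a using hL.word_induction with
  | one => simp
  | mul i m a hm hm1 ha ih =>
    rw [mul_inv_rev, hL.wordLength_mul hm hm1 ha]
    have := hL.wordLength_mul_le a⁻¹ m⁻¹
    have := hL.wordLength_le_one (inv_mem hm)
    lia

theorem exists_wordLength_conj_lt {a : A} {i : ι} (hi : hL.Starts a i) (hi' : hL.Starts a⁻¹ i)
    (ha : a ∉ L i) : ∃ m, hL.wordLength (m⁻¹ * a * m) < hL.wordLength a := by
  obtain ⟨m, h⟩ := hi
  obtain ⟨hm, -, x, -, rfl, hlen⟩ := hL.exists_eq_mul_of_firstLetter_eq h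
  have hxi : x⁻¹ ∉ L i := fun hx' => ha (mul_mem hm (inv_mem_iff.1 hx'))
  rw [mul_inv_rev, starts_congr (hL.firstLetter_mul_right hxi (inv_mem hm))] at hi'
  obtain ⟨m', h'⟩ := hi'
  obtain ⟨hm', -, t, -, ht, hlen'⟩ := hL.exists_eq_mul_of_firstLetter_eq h'
  refine ⟨m, ?_⟩
  have hconj : m⁻¹ * (m * x) * m = t⁻¹ * (m'⁻¹ * m) := by
    rw [← inv_inv x, ht]; group
  rw [hconj]
  have := hL.wordLength_mul_le t⁻¹ (m'⁻¹ * m)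
  have := hL.wordLength_le_one (mul_mem (inv_mem hm') hm)
  have := hL.wordLength_inv_le t
  have := hL.wordLength_inv_le x
  lia

theorem exists_conj_mem_or_cyclicallyReduced {a : A} (ha : a ≠ 1) :
    ∃ u, (∃ i, u⁻¹ * a * u ∈ L i) ∨
      ∃ i j, i ≠ j ∧ hL.Starts (u⁻¹ * a * u) i ∧ hL.Starts (u⁻¹ * a * u)⁻¹ j := by
  induction hn : hL.wordLength a using Nat.strong_induction_on generalizing a with
  | _ n ih =>
    obtain ⟨i, hi⟩ := hL.exists_starts ha
    obtain ⟨j, hj⟩ := hL.exists_starts (inv_ne_one.2 ha)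
    by_cases hij : i = j
    · subst hij
      by_cases hai : a ∈ L i
      · exact ⟨1, Or.inl ⟨i, by simpa using hai⟩⟩
      obtain ⟨m, hm⟩ := hL.exists_wordLength_conj_lt hi hj hai
      have hne : m⁻¹ * a * m ≠ 1 := by simpa [mul_assoc, mul_eq_one_iff_eq_inv] using ha
      obtain ⟨u, hu⟩ := ih _ (hn ▸ hm) hne rfl
      refine ⟨m * u, ?_⟩
      have hconj : (m * u)⁻¹ * a * (m * u) = u⁻¹ * (m⁻¹ * a * m) * u := by group
      rwa [hconj]
    · exact ⟨1, Or.inr ⟨i, j, hij, by simpa using hi, by simpa using hj⟩⟩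

theorem conj_injective (hL : IsInternalFreeProduct L) [Nontrivial {i // L i ≠ ⊥}] :
    Function.Injective (MulAut.conj : A →* MulAut A) := by
  rw [injective_iff_map_eq_one]
  intro a ha
  by_contra ha1
  obtain ⟨⟨i, hi⟩, ⟨j, hj⟩, hij⟩ := exists_pair_ne {i // L i ≠ ⊥}
  obtain ⟨k, hk, hak⟩ : ∃ k, L k ≠ ⊥ ∧ a ∉ L k := by
    by_contra! h
    exact hij (Subtype.ext
      ((hL.starts_of_mem (h i hi) ha1).unique (hL.starts_of_mem (h j hj) ha1)))
  obtain ⟨b, hb, hb1⟩ := (L k).bot_or_exists_ne_one.resolve_left hk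
  have hab : a * b * a⁻¹ = b := by simpa using DFunLike.congr_fun ha b
  exact hL.conj_notMem hak hb hb1 k (by rwa [hab])

theorem eq_of_eq_map_conj (hL : IsInternalFreeProduct L) {i j : ι} (hj : L j ≠ ⊥) {x : A}
    (h : L i = (L j).map (MulAut.conj x).toMonoidHom) : i = j := by
  obtain ⟨b, hb, hb1⟩ := (L j).bot_or_exists_ne_one.resolve_left hj
  have hx : x * b * x⁻¹ ∈ L i := h ▸ Subgroup.mem_map_of_mem (MulAut.conj x).toMonoidHom hb
  have hx1 : x * b * x⁻¹ ≠ 1 := by rwa [Ne, conj_eq_one_iff]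
  by_cases hxj : x ∈ L j
  · exact (hL.starts_of_mem hx hx1).unique
      (hL.starts_of_mem (mul_mem (mul_mem hxj hb) (inv_mem hxj)) hx1)
  · exact absurd hx (hL.conj_notMem hxj hb hb1 i)

end Letters

end IsInternalFreeProduct

/-! ### Separating families of almost invariant sets -/

/-- The elements `a` for which the conjugate `a K a⁻¹` meets `c` outside the identity. -/
def conjTrace {A : Type*} [Group A] (c : Set A) (K : Subgroup A) : Set A :=
  {a | ∃ p ∈ K, p ≠ 1 ∧ a * p * a⁻¹ ∈ c}

/-- A finite family `C` of subsets of `A`, almost invariant under right translations and compatible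
with the left cosets of the `P i`, whose translates distinguish the conjugates of the `P i` from
each other and separate the positive from the negative powers of every element which lies in no
such conjugate. -/
structure IsSeparatingFamily {A κ : Type*} [Group A] (P : κ → Subgroup A) (C : Set (Set A)) :
    Prop where
  finite : C.Finite
  eventually_mul_mem_iff : ∀ c ∈ C, ∀ b, ∀ᶠ a in Filter.cofinite, (a * b ∈ c ↔ a ∈ c)
  eventually_mem_conjTrace_iff :
    ∀ c ∈ C, ∀ i, ∀ᶠ a in Filter.cofinite, (a ∈ conjTrace c (P i) ↔ a ∈ c)
  exists_separating_conjugates : ∀ i j z, P i ≠ (P j).map (MulAut.conj z).toMonoidHom →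
    ∃ u, ∃ c ∈ C, ¬ (u⁻¹ ∈ conjTrace c (P i) ↔ u⁻¹ * z ∈ conjTrace c (P j))
  exists_conj_mem_or_separating_powers : ∀ a, a ≠ 1 → ∃ u, (∃ i, u⁻¹ * a * u ∈ P i) ∨
    ∃ c ∈ C, ∀ n m : ℕ, ¬ ((u⁻¹ * a * u) ^ (n + 1) ∈ c ↔ ((u⁻¹ * a * u) ^ (m + 1))⁻¹ ∈ c)

namespace IsInternalFreeProduct

section Cuts

variable {A ι : Type*} [Group A] {L : ι → Subgroup A} (hL : IsInternalFreeProduct L)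

/-- The elements whose reduced word starts with a letter in `θ`. -/
def firstLetterCut (θ : Set (ι × A)) : Set A :=
  {a | ∃ p ∈ θ, hL.firstLetter a = some p}

variable {hL} in
theorem mem_firstLetterCut_congr {θ : Set (ι × A)} {a b : A}
    (h : hL.firstLetter a = hL.firstLetter b) :
    a ∈ hL.firstLetterCut θ ↔ b ∈ hL.firstLetterCut θ := by
  simp only [firstLetterCut, h, Set.mem_ofPred_eq]

theorem mem_firstLetterCut_of_mem {θ : Set (ι × A)} {i : ι} {m : A} (hm : m ∈ L i) :
    m ∈ hL.firstLetterCut θ ↔ m ≠ 1 ∧ (i, m) ∈ θ := by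
  by_cases hm1 : m = 1
  · simp [hm1, firstLetterCut, hL.firstLetter_one]
  · simp [firstLetterCut, hL.firstLetter_of_mem hm hm1, hm1]

theorem eventually_mul_mem_firstLetterCut_iff {θ : Set (ι × A)}
    (hθ : ∀ i, ∀ b ∈ L i, ∀ᶠ a in Filter.cofinite,
      a ∈ L i → (a * b ∈ hL.firstLetterCut θ ↔ a ∈ hL.firstLetterCut θ)) (b : A) :
    ∀ᶠ a in Filter.cofinite, (a * b ∈ hL.firstLetterCut θ ↔ a ∈ hL.firstLetterCut θ) := by
  induction b using hL.word_induction with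
  | one => simp
  | mul i m b hm _ _ ih =>
    filter_upwards [hθ i m hm, (mul_left_injective m).tendsto_cofinite.eventually ih]
      with a ha hab
    rw [← mul_assoc, hab]
    by_cases hai : a ∈ L i
    · exact ha hai
    · exact mem_firstLetterCut_congr (hL.firstLetter_mul_right hai hm)

theorem eventually_mem_conjTrace_firstLetterCut_iff {θ : Set (ι × A)} {i : ι} (hi : L i ≠ ⊥)
    (hθ : ∀ a ∈ L i, ∀ b ∈ L i, a ≠ 1 → b ≠ 1 → ((i, a) ∈ θ ↔ (i, b) ∈ θ)) :
    ∀ᶠ a in Filter.cofinite,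
      (a ∈ conjTrace (hL.firstLetterCut θ) (L i) ↔ a ∈ hL.firstLetterCut θ) := by
  obtain ⟨p, hp, hp1⟩ := (L i).bot_or_exists_ne_one.resolve_left hi
  filter_upwards [(Set.finite_singleton (1 : A)).eventually_cofinite_notMem] with a ha1
  by_cases hai : a ∈ L i
  · rw [hL.mem_firstLetterCut_of_mem hai]
    constructor
    · rintro ⟨q, hq, -, h⟩
      have hconj : a * q * a⁻¹ ∈ L i := mul_mem (mul_mem hai hq) (inv_mem hai)
      rw [hL.mem_firstLetterCut_of_mem hconj] at h
      exact ⟨ha1, (hθ _ hai _ hconj ha1 h.1).2 h.2⟩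
    · rintro ⟨-, h⟩
      exact ⟨a, hai, ha1, by simpa [hL.mem_firstLetterCut_of_mem hai] using ⟨ha1, h⟩⟩
  · constructor
    · rintro ⟨q, hq, hq1, h⟩
      exact (mem_firstLetterCut_congr (hL.firstLetter_conj hai hq hq1)).1 h
    · exact fun h => ⟨p, hp, hp1, (mem_firstLetterCut_congr (hL.firstLetter_conj hai hp hp1)).2 h⟩

/-- The elements whose reduced word starts with a letter of the factor with index `k`. -/
def startCut (k : ι) : Set A :=
  {a | hL.Starts a k}

theorem startCut_eq_firstLetterCut (k : ι) :
    hL.startCut k = hL.firstLetterCut {p | p.1 = k} := by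
  ext a
  simp only [startCut, firstLetterCut, Starts, Set.mem_ofPred_eq, Prod.exists]
  constructor
  · rintro ⟨m, h⟩
    exact ⟨k, m, rfl, h⟩
  · rintro ⟨i, m, rfl, h⟩
    exact ⟨m, h⟩

theorem eventually_mul_mem_startCut_iff (k : ι) (b : A) :
    ∀ᶠ a in Filter.cofinite, (a * b ∈ hL.startCut k ↔ a ∈ hL.startCut k) := by
  rw [startCut_eq_firstLetterCut]
  refine hL.eventually_mul_mem_firstLetterCut_iff (fun i b hb => ?_) b
  filter_upwards [(Set.toFinite {1, b⁻¹}).eventually_cofinite_notMem] with a hab ha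
  rw [hL.mem_firstLetterCut_of_mem (mul_mem ha hb), hL.mem_firstLetterCut_of_mem ha]
  simp only [Set.mem_insert_iff, Set.mem_singleton_iff, not_or, ← mul_eq_one_iff_eq_inv] at hab
  simp [hab]

theorem eventually_mem_conjTrace_startCut_iff (k : ι) {i : ι} (hi : L i ≠ ⊥) :
    ∀ᶠ a in Filter.cofinite, (a ∈ conjTrace (hL.startCut k) (L i) ↔ a ∈ hL.startCut k) := by
  rw [startCut_eq_firstLetterCut]
  exact hL.eventually_mem_conjTrace_firstLetterCut_iff hi (by simp)

/-- The elements whose reduced word starts with a positive power of `b`, a letter of the factor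
with index `k`. -/
def posCut (k : ι) (b : A) : Set A :=
  hL.firstLetterCut {p | p.1 = k ∧ ∃ n : ℕ, p.2 = b ^ (n + 1)}

theorem zpow_mem_posCut {k : ι} {b : A} (hb : Function.Injective fun z : ℤ => b ^ z)
    (hk : L k = Subgroup.zpowers b) (z : ℤ) : b ^ z ∈ hL.posCut k b ↔ 0 < z := by
  rw [posCut, hL.mem_firstLetterCut_of_mem (i := k) (hk ▸ Subgroup.zpow_mem_zpowers b z)]
  constructor
  · rintro ⟨-, -, n, hn⟩
    have : z = (n + 1 : ℕ) := hb (by simpa only [zpow_natCast] using hn)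
    lia
  · intro hz
    obtain ⟨n, rfl⟩ : ∃ n : ℕ, z = (n + 1 : ℕ) := ⟨(z - 1).toNat, by lia⟩
    refine ⟨fun h => ?_, rfl, n, zpow_natCast _ _⟩
    have : ((n + 1 : ℕ) : ℤ) = 0 := hb (by simpa only [zpow_zero] using h)
    lia

theorem eventually_mul_mem_posCut_iff {k : ι} {b : A}
    (hb : Function.Injective fun z : ℤ => b ^ z) (hk : L k = Subgroup.zpowers b) (c : A) :
    ∀ᶠ a in Filter.cofinite, (a * c ∈ hL.posCut k b ↔ a ∈ hL.posCut k b) := by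
  refine hL.eventually_mul_mem_firstLetterCut_iff (fun i c hc => ?_) c
  change ∀ᶠ a in Filter.cofinite, a ∈ L i → (a * c ∈ hL.posCut k b ↔ a ∈ hL.posCut k b)
  by_cases hik : i = k
  · subst hik
    rw [hk] at hc ⊢
    obtain ⟨r, rfl⟩ := Subgroup.mem_zpowers_iff.1 hc
    filter_upwards [((Set.finite_Icc (-|r|) |r|).image (b ^ ·)).eventually_cofinite_notMem]
      with a hab ha
    obtain ⟨z, rfl⟩ := Subgroup.mem_zpowers_iff.1 ha
    have hz : z ∉ Set.Icc (-|r|) |r| := fun hz => hab ⟨z, hz, rfl⟩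
    rw [← zpow_add, hL.zpow_mem_posCut hb hk, hL.zpow_mem_posCut hb hk]
    rw [Set.mem_Icc] at hz
    rcases abs_cases r with hr | hr <;> lia
  · refine Filter.Eventually.of_forall fun a ha => ?_
    rw [posCut, hL.mem_firstLetterCut_of_mem (mul_mem ha hc), hL.mem_firstLetterCut_of_mem ha]
    simp [hik]

theorem eventually_mem_conjTrace_posCut_iff {k : ι} {b : A} {i : ι} (hi : L i ≠ ⊥) (hik : i ≠ k) :
    ∀ᶠ a in Filter.cofinite, (a ∈ conjTrace (hL.posCut k b) (L i) ↔ a ∈ hL.posCut k b) :=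
  hL.eventually_mem_conjTrace_firstLetterCut_iff hi (by simp [hik])

theorem not_pow_mem_posCut_iff_inv_mem {k : ι} {b : A}
    (hb : Function.Injective fun z : ℤ => b ^ z) (hk : L k = Subgroup.zpowers b) {a : A}
    (ha : a ∈ L k) (ha1 : a ≠ 1) (n m : ℕ) :
    ¬ (a ^ (n + 1) ∈ hL.posCut k b ↔ (a ^ (m + 1))⁻¹ ∈ hL.posCut k b) := by
  obtain ⟨z, rfl⟩ := Subgroup.mem_zpowers_iff.1 (hk ▸ ha)
  have hz : z ≠ 0 := by
    rintro rfl
    exact ha1 (zpow_zero b)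
  rw [← zpow_natCast, ← zpow_natCast, ← zpow_mul, ← zpow_mul, ← zpow_neg,
    ← neg_mul, hL.zpow_mem_posCut hb hk, hL.zpow_mem_posCut hb hk,
    mul_pos_iff_of_pos_right (by positivity), mul_pos_iff_of_pos_right (by positivity)]
  lia

theorem not_pow_mem_startCut_iff_inv_mem {a : A} {i j : ι} (hi : hL.Starts a i)
    (hj : hL.Starts a⁻¹ j) (hij : i ≠ j) (n m : ℕ) :
    ¬ (a ^ (n + 1) ∈ hL.startCut i ↔ (a ^ (m + 1))⁻¹ ∈ hL.startCut i) := by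
  intro h
  refine hij ((h.1 (hL.starts_pow_succ hi hj hij n)).unique ?_)
  rw [← inv_pow]
  exact hL.starts_pow_succ hj (by rwa [inv_inv]) hij.symm m

theorem exists_mem_not_starts_conj {i j : ι} {z : A}
    (h : L i ≠ (L j).map (MulAut.conj z).toMonoidHom) :
    ∃ w ∈ L i, ∀ p ∈ L j, p ≠ 1 → ¬ hL.Starts (w⁻¹ * z * p * (w⁻¹ * z)⁻¹) i := by
  by_cases hz : z ∈ L j
  · have hij : i ≠ j := by
      rintro rfl
      exact h (Subgroup.mem_normalizer_iff_map_conj_eq.1 (Subgroup.le_normalizer hz)).symm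
    refine ⟨1, one_mem _, fun p hp hp1 hs => hij (hs.unique (hL.starts_of_mem ?_ ?_))⟩
    · simpa using mul_mem (mul_mem hz hp) (inv_mem hz)
    · rwa [Ne, conj_eq_one_iff]
  by_cases hs : hL.Starts z i
  · obtain ⟨m, hm⟩ := hs
    obtain ⟨hmL, -, z', hz', rfl, -⟩ := hL.exists_eq_mul_of_firstLetter_eq hm
    refine ⟨m, hmL, fun p hp hp1 => ?_⟩
    rw [inv_mul_cancel_left]
    by_cases hzj : z' ∈ L j
    · intro hs
      obtain rfl := hs.unique (hL.starts_of_mem (mul_mem (mul_mem hzj hp) (inv_mem hzj))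
        (by rwa [Ne, conj_eq_one_iff]))
      exact hz (mul_mem hmL hzj)
    · rwa [starts_congr (hL.firstLetter_conj hzj hp hp1)]
  · exact ⟨1, one_mem _, fun p hp hp1 => by
      rwa [inv_one, one_mul, starts_congr (hL.firstLetter_conj hz hp hp1)]⟩

theorem exists_startCut_separating_conjugates {i j : ι} (hi : L i ≠ ⊥) {z : A}
    (h : L i ≠ (L j).map (MulAut.conj z).toMonoidHom) :
    ∃ u, ¬ (u⁻¹ ∈ conjTrace (hL.startCut i) (L i) ↔
      u⁻¹ * z ∈ conjTrace (hL.startCut i) (L j)) := by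
  obtain ⟨w, hw, hs⟩ := hL.exists_mem_not_starts_conj h
  obtain ⟨p, hp, hp1⟩ := (L i).bot_or_exists_ne_one.resolve_left hi
  refine ⟨w, fun hiff => ?_⟩
  obtain ⟨q, hq, hq1, hqs⟩ := hiff.1 ⟨p, hp, hp1, hL.starts_of_mem
    (mul_mem (mul_mem (inv_mem hw) hp) (inv_mem (inv_mem hw))) (by rwa [Ne, conj_eq_one_iff])⟩
  exact hs q hq hq1 hqs

end Cuts

theorem isSeparatingFamily {A κ τ : Type*} [Group A] [Finite κ] [Finite τ]
    {L : κ ⊕ τ → Subgroup A} (hL : IsInternalFreeProduct L) (hne : ∀ i, L (Sum.inl i) ≠ ⊥)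
    {b : τ → A} (hb : ∀ x, Function.Injective fun z : ℤ => b x ^ z)
    (hLb : ∀ x, L (Sum.inr x) = Subgroup.zpowers (b x)) :
    IsSeparatingFamily (fun i => L (Sum.inl i))
      (Set.range hL.startCut ∪ Set.range fun x => hL.posCut (Sum.inr x) (b x)) where
  finite := (Set.finite_range _).union (Set.finite_range _)
  eventually_mul_mem_iff := by
    rintro _ (⟨k, rfl⟩ | ⟨x, rfl⟩) c
    · exact hL.eventually_mul_mem_startCut_iff k c
    · exact hL.eventually_mul_mem_posCut_iff (hb x) (hLb x) c
  eventually_mem_conjTrace_iff := by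
    rintro _ (⟨k, rfl⟩ | ⟨x, rfl⟩) i
    · exact hL.eventually_mem_conjTrace_startCut_iff k (hne i)
    · exact hL.eventually_mem_conjTrace_posCut_iff (hne i) Sum.inl_ne_inr
  exists_separating_conjugates i j z h := by
    obtain ⟨u, hu⟩ := hL.exists_startCut_separating_conjugates (hne i) h
    exact ⟨u, _, Or.inl ⟨_, rfl⟩, hu⟩
  exists_conj_mem_or_separating_powers a ha := by
    obtain ⟨u, ⟨i | x, hu⟩ | ⟨i, j, hij, hi, hj⟩⟩ := hL.exists_conj_mem_or_cyclicallyReduced ha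
    · exact ⟨u, Or.inl ⟨i, hu⟩⟩
    · refine ⟨u, Or.inr ⟨_, Or.inr ⟨x, rfl⟩,
        hL.not_pow_mem_posCut_iff_inv_mem (hb x) (hLb x) hu ?_⟩⟩
      simpa [mul_assoc, mul_eq_one_iff_eq_inv] using ha
    · exact ⟨u, Or.inr ⟨_, Or.inl ⟨i, rfl⟩, hL.not_pow_mem_startCut_iff_inv_mem hi hj hij⟩⟩

end IsInternalFreeProduct

/-! ### Cuts in graphs -/

theorem finite_setOf_smul_eq_of_finite_stabilizer {G α : Type*} [Group G] [MulAction G α] {a : α}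
    (h : {g : G | g • a = a}.Finite) (b : α) : {g : G | g • a = b}.Finite := by
  rcases Set.eq_empty_or_nonempty {g : G | g • a = b} with h' | ⟨g, hg⟩
  · rw [h']
    exact Set.finite_empty
  · refine (h.smul_set (a := g)).subset fun g' hg' => ?_
    rw [Set.mem_smul_set_iff_inv_smul_mem]
    simp only [Set.mem_ofPred_eq, smul_eq_mul, mul_smul] at *
    rw [hg', ← hg, inv_smul_smul]

/-- The edges of the directed graph `Y` which join the set of vertices `c` to its complement. -/
def edgeBoundary {X : Type*} (Y : Set (X × X)) (c : Set X) : Set (X × X) :=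
  {p | p ∈ Y ∧ ¬ (p.1 ∈ c ↔ p.2 ∈ c)}

/-- The directed graph on `X` with edge set `Y` is connected, in the sense that no proper nonempty
set of vertices is a union of components. -/
def IsConnectedEdgeSet {X : Type*} (Y : Set (X × X)) : Prop :=
  ∀ c, edgeBoundary Y c = ∅ → c = ∅ ∨ c = Set.univ

/-- A bond: a proper nonempty set of vertices with inclusion-minimal edge boundary. -/
structure IsBond {X : Type*} (Y : Set (X × X)) (c : Set X) : Prop where
  nonempty : c.Nonempty
  ne_univ : c ≠ Set.univ
  minimal : ∀ c', edgeBoundary Y c' ⊆ edgeBoundary Y c →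
    c' = ∅ ∨ c' = Set.univ ∨ c' = c ∨ c' = cᶜ

/-- The bonds with at most `k` boundary edges. -/
def boundedBonds {X : Type*} (Y : Set (X × X)) (k : ℕ) : Set (Set X) :=
  {c | IsBond Y c ∧ (edgeBoundary Y c).encard ≤ k}

/-- Two sets cross if all four of their corners are nonempty; otherwise they are nested. -/
def Crosses {X : Type*} (c d : Set X) : Prop :=
  (c ∩ d).Nonempty ∧ (c ∩ dᶜ).Nonempty ∧ (cᶜ ∩ d).Nonempty ∧ (cᶜ ∩ dᶜ).Nonempty

/-- The family `S` determines `c` if membership in `c` depends only on membership in finitely many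
elements of `S`, i.e. if `c` lies in the Boolean algebra generated by `S`. -/
def Determines {X : Type*} (S : Set (Set X)) (c : Set X) : Prop :=
  ∃ F ⊆ S, F.Finite ∧ ∀ x y, (∀ e ∈ F, x ∈ e ↔ y ∈ e) → (x ∈ c ↔ y ∈ c)

namespace Determines

variable {X : Type*} {S S' : Set (Set X)} {c d e : Set X}

theorem of_mem (h : c ∈ S) : Determines S c :=
  ⟨{c}, Set.singleton_subset_iff.2 h, Set.finite_singleton c, fun _ _ hxy => hxy c rfl⟩

theorem of_forall (h : ∀ x y, x ∈ c ↔ y ∈ c) : Determines S c :=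
  ⟨∅, Set.empty_subset _, Set.finite_empty, fun x y _ => h x y⟩

theorem mono (h : Determines S c) (hS : S ⊆ S') : Determines S' c := by
  obtain ⟨F, hF, h⟩ := h
  exact ⟨F, hF.trans hS, h⟩

theorem combine (hc : Determines S c) (hd : Determines S d)
    (h : ∀ x y, (x ∈ c ↔ y ∈ c) → (x ∈ d ↔ y ∈ d) → (x ∈ e ↔ y ∈ e)) : Determines S e := by
  obtain ⟨F, hF, hf, hFc⟩ := hc
  obtain ⟨F', hF', hf', hFd⟩ := hd
  exact ⟨F ∪ F', Set.union_subset hF hF', hf.union hf', fun x y hxy =>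
    h x y (hFc x y fun e he => hxy e (Or.inl he)) (hFd x y fun e he => hxy e (Or.inr he))⟩

theorem trans (h : Determines S c) (hS : ∀ e ∈ S, Determines S' e) : Determines S' c := by
  obtain ⟨F, hF, hf, hFc⟩ := h
  choose! F' hF' hf' hFd using hS
  exact ⟨⋃ e ∈ F, F' e, Set.iUnion₂_subset fun e he => hF' e (hF he),
    hf.biUnion fun e he => hf' e (hF he), fun x y hxy => hFc x y fun e he =>
      hFd e (hF he) x y fun e' he' => hxy e' (Set.mem_biUnion he he')⟩

theorem iff_of_forall (h : Determines S c) {x y : X} (hxy : ∀ e ∈ S, x ∈ e ↔ y ∈ e) :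
    x ∈ c ↔ y ∈ c := by
  obtain ⟨F, hF, -, hFc⟩ := h
  exact hFc x y fun e he => hxy e (hF he)

theorem of_compl (h : Determines S cᶜ) : Determines S c := by
  obtain ⟨F, hF, hf, hFc⟩ := h
  exact ⟨F, hF, hf, fun x y hxy => not_iff_not.1 (hFc x y hxy)⟩

theorem smul {G : Type*} [Group G] [MulAction G X] (h : Determines S c) (g : G) :
    Determines (g • S) (g • c) := by
  obtain ⟨F, hF, hf, hFc⟩ := h
  refine ⟨g • F, Set.smul_set_mono hF, hf.smul_set, fun x y hxy => ?_⟩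
  rw [Set.mem_smul_set_iff_inv_smul_mem, Set.mem_smul_set_iff_inv_smul_mem]
  refine hFc _ _ fun e he => ?_
  have := hxy (g • e) (Set.smul_mem_smul_set he)
  rwa [Set.mem_smul_set_iff_inv_smul_mem, Set.mem_smul_set_iff_inv_smul_mem] at this

end Determines

namespace Crosses

variable {X : Type*} {c d e : Set X}

theorem symm (h : Crosses c d) : Crosses d c := by
  obtain ⟨h1, h2, h3, h4⟩ := h
  exact ⟨Set.inter_comm c d ▸ h1, Set.inter_comm cᶜ d ▸ h3, Set.inter_comm c dᶜ ▸ h2,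
    Set.inter_comm cᶜ dᶜ ▸ h4⟩

theorem compl_right (h : Crosses c d) : Crosses c dᶜ := by
  obtain ⟨h1, h2, h3, h4⟩ := h
  exact ⟨h2, by rwa [compl_compl], h4, by rwa [compl_compl]⟩

theorem compl_left (h : Crosses c d) : Crosses cᶜ d := h.symm.compl_right.symm

theorem compl_left_iff : Crosses cᶜ d ↔ Crosses c d :=
  ⟨fun h => by simpa only [compl_compl] using h.compl_left, compl_left⟩

theorem smul {G : Type*} [Group G] [MulAction G X] (h : Crosses c d) (g : G) :
    Crosses (g • c) (g • d) := by
  simpa only [Crosses, ← Set.smul_set_compl, ← Set.smul_set_inter, Set.smul_set_nonempty]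

theorem left_or_right_of_inter (hcd : Crosses c d) (h : Crosses (c ∩ d) e) :
    Crosses c e ∨ Crosses d e := by
  obtain ⟨⟨y, ⟨hyc, hyd⟩, hye⟩, ⟨z, ⟨hzc, hzd⟩, hze⟩, ⟨s, hs, hse⟩, ⟨t, ht, hte⟩⟩ := h
  obtain ⟨x, hxc, hxd⟩ := hcd.2.2.2
  have left (h : (cᶜ ∩ e).Nonempty) (h' : (cᶜ ∩ eᶜ).Nonempty) : Crosses c e :=
    ⟨⟨y, hyc, hye⟩, ⟨z, hzc, hze⟩, h, h'⟩
  have right (h : (dᶜ ∩ e).Nonempty) (h' : (dᶜ ∩ eᶜ).Nonempty) : Crosses d e :=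
    ⟨⟨y, hyd, hye⟩, ⟨z, hzd, hze⟩, h, h'⟩
  by_cases hxe : x ∈ e
  · by_cases htc : t ∈ c
    · exact Or.inr (right ⟨x, hxd, hxe⟩ ⟨t, fun htd => ht ⟨htc, htd⟩, hte⟩)
    · exact Or.inl (left ⟨x, hxc, hxe⟩ ⟨t, htc, hte⟩)
  · by_cases hsc : s ∈ c
    · exact Or.inr (right ⟨s, fun hsd => hs ⟨hsc, hsd⟩, hse⟩ ⟨x, hxd, hxe⟩)
    · exact Or.inl (left ⟨s, hsc, hse⟩ ⟨x, hxc, hxe⟩)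

theorem left_or_right_of_union (hcd : Crosses c d) (h : Crosses (c ∪ d) e) :
    Crosses c e ∨ Crosses d e := by
  rw [← compl_left_iff, Set.compl_union] at h
  rw [← compl_left_iff, ← compl_left_iff (c := d)]
  exact left_or_right_of_inter hcd.compl_left.compl_right h

theorem left_and_right_of_inter_of_union (h : Crosses (c ∩ d) e) (h' : Crosses (c ∪ d) e) :
    Crosses c e ∧ Crosses d e := by
  obtain ⟨⟨x, hx, hxe⟩, ⟨y, hy, hye⟩, -⟩ := h
  obtain ⟨-, -, ⟨z, hz, hze⟩, ⟨t, ht, hte⟩⟩ := h'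
  rw [Set.compl_union] at hz ht
  exact ⟨⟨⟨x, hx.1, hxe⟩, ⟨y, hy.1, hye⟩, ⟨z, hz.1, hze⟩, ⟨t, ht.1, hte⟩⟩,
    ⟨⟨x, hx.2, hxe⟩, ⟨y, hy.2, hye⟩, ⟨z, hz.2, hze⟩, ⟨t, ht.2, hte⟩⟩⟩

theorem not_inter_right : ¬ Crosses (c ∩ d) d := by
  rintro ⟨-, ⟨x, hx, hxd⟩, -⟩
  exact hxd hx.2

theorem not_union_right : ¬ Crosses (c ∪ d) d := by
  rintro ⟨-, -, ⟨x, hx, hxd⟩, -⟩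
  exact hx (Or.inr hxd)

end Crosses

section EdgeBoundary

variable {X : Type*} {Y : Set (X × X)} {c d : Set X}

theorem mem_edgeBoundary {p : X × X} :
    p ∈ edgeBoundary Y c ↔ p ∈ Y ∧ ¬ (p.1 ∈ c ↔ p.2 ∈ c) := Iff.rfl

theorem edgeBoundary_compl : edgeBoundary Y cᶜ = edgeBoundary Y c := by
  ext p
  simp only [mem_edgeBoundary, Set.mem_compl_iff, not_iff_not]

theorem edgeBoundary_sdiff_singleton {e : X × X} :
    edgeBoundary (Y \ {e}) c = edgeBoundary Y c \ {e} := by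
  ext p
  simp only [mem_edgeBoundary, Set.mem_sdiff, Set.mem_singleton_iff]
  tauto

theorem edgeBoundary_symmDiff :
    edgeBoundary Y (symmDiff c d) = symmDiff (edgeBoundary Y c) (edgeBoundary Y d) := by
  ext p
  simp only [mem_edgeBoundary, Set.mem_symmDiff]
  tauto

theorem edgeBoundary_inter_subset :
    edgeBoundary Y (c ∩ d) ⊆ edgeBoundary Y c ∪ edgeBoundary Y d := by
  intro p
  simp only [mem_edgeBoundary, Set.mem_inter_iff, Set.mem_union]
  tauto

theorem edgeBoundary_union_subset :
    edgeBoundary Y (c ∪ d) ⊆ edgeBoundary Y c ∪ edgeBoundary Y d := by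
  intro p
  simp only [mem_edgeBoundary, Set.mem_union]
  tauto

theorem edgeBoundary_inter_inter_edgeBoundary_union_subset :
    edgeBoundary Y (c ∩ d) ∩ edgeBoundary Y (c ∪ d) ⊆ edgeBoundary Y c ∩ edgeBoundary Y d := by
  intro p
  simp only [mem_edgeBoundary, Set.mem_inter_iff, Set.mem_union]
  tauto

theorem ncard_edgeBoundary_inter_add_union (hc : (edgeBoundary Y c).Finite)
    (hd : (edgeBoundary Y d).Finite) :
    (edgeBoundary Y (c ∩ d)).ncard + (edgeBoundary Y (c ∪ d)).ncard ≤
      (edgeBoundary Y c).ncard + (edgeBoundary Y d).ncard := by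
  have hf := hc.union hd
  rw [← Set.ncard_union_add_ncard_inter _ _ (hf.subset edgeBoundary_inter_subset)
      (hf.subset edgeBoundary_union_subset), ← Set.ncard_union_add_ncard_inter _ _ hc hd]
  exact add_le_add
    (Set.ncard_le_ncard (Set.union_subset edgeBoundary_inter_subset edgeBoundary_union_subset) hf)
    (Set.ncard_le_ncard edgeBoundary_inter_inter_edgeBoundary_union_subset
      (hc.subset Set.inter_subset_left))

theorem edgeBoundary_smul {G : Type*} [Group G] [MulAction G X] (hG : ∀ g : G, g • Y = Y) (g : G) :
    edgeBoundary Y (g • c) = g • edgeBoundary Y c := by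
  ext p
  rw [Set.mem_smul_set_iff_inv_smul_mem, mem_edgeBoundary, mem_edgeBoundary,
    ← Set.mem_smul_set_iff_inv_smul_mem, hG, Set.mem_smul_set_iff_inv_smul_mem,
    Set.mem_smul_set_iff_inv_smul_mem]
  rfl

end EdgeBoundary

section Bonds

variable {X : Type*} {Y : Set (X × X)} {c d : Set X} {k : ℕ}

theorem IsConnectedEdgeSet.eq_or_eq_compl_of_edgeBoundary_eq (hY : IsConnectedEdgeSet Y)
    (h : edgeBoundary Y c = edgeBoundary Y d) : c = d ∨ c = dᶜ := by
  rcases hY (symmDiff c d) (by rw [edgeBoundary_symmDiff, h, symmDiff_self]; rfl) with h | h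
  · exact Or.inl (symmDiff_eq_bot.1 h)
  · refine Or.inr (Set.ext fun x => ?_)
    have hx : x ∈ symmDiff c d := h ▸ Set.mem_univ x
    rw [Set.mem_symmDiff] at hx
    rw [Set.mem_compl_iff]
    tauto

theorem IsConnectedEdgeSet.exists_finite_link (hY : IsConnectedEdgeSet Y) (x y : X) :
    ∃ F ⊆ Y, F.Finite ∧ ∀ c, ¬ (x ∈ c ↔ y ∈ c) → ∃ p ∈ F, p ∈ edgeBoundary Y c := by
  set linked : Set X := {y | ∃ F ⊆ Y, F.Finite ∧
    ∀ c, ¬ (x ∈ c ↔ y ∈ c) → ∃ p ∈ F, p ∈ edgeBoundary Y c}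
  have hx : x ∈ linked :=
    ⟨∅, Set.empty_subset _, Set.finite_empty, fun c hc => (hc Iff.rfl).elim⟩
  have step : ∀ p ∈ Y, ∀ y z, p = (y, z) ∨ p = (z, y) → y ∈ linked → z ∈ linked := by
    rintro p hp y z hpyz ⟨F, hF, hf, h⟩
    refine ⟨insert p F, Set.insert_subset hp hF, hf.insert p, fun c hc => ?_⟩
    by_cases hxy : x ∈ c ↔ y ∈ c
    · refine ⟨p, Set.mem_insert _ _, hp, ?_⟩
      rcases hpyz with rfl | rfl <;> tauto
    · obtain ⟨q, hq, h⟩ := h c hxy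
      exact ⟨q, Set.mem_insert_of_mem _ hq, h⟩
  have hb : edgeBoundary Y linked = ∅ :=
    Set.eq_empty_of_forall_notMem fun ⟨y, z⟩ ⟨hp, h⟩ =>
      h ⟨step _ hp y z (Or.inl rfl), step _ hp z y (Or.inr rfl)⟩
  rcases hY linked hb with h | h
  · exact ((h ▸ hx : x ∈ (∅ : Set X))).elim
  · exact (h ▸ Set.mem_univ y : y ∈ linked)

theorem IsBond.compl (h : IsBond Y c) : IsBond Y cᶜ where
  nonempty := Set.nonempty_compl.2 h.ne_univ
  ne_univ := by simpa only [ne_eq, Set.compl_univ_iff] using h.nonempty.ne_empty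
  minimal c' hc' := by
    rw [edgeBoundary_compl] at hc'
    rw [compl_compl]
    have := h.minimal c' hc'
    tauto

theorem IsBond.smul {G : Type*} [Group G] [MulAction G X] (hG : ∀ g : G, g • Y = Y)
    (h : IsBond Y c) (g : G) : IsBond Y (g • c) where
  nonempty := h.nonempty.smul_set
  ne_univ := by simpa [smul_eq_iff_eq_inv_smul] using h.ne_univ
  minimal c' hc' := by
    have := h.minimal (g⁻¹ • c') (by
      rw [edgeBoundary_smul hG]
      rwa [edgeBoundary_smul hG, Set.subset_smul_set_iff] at hc')
    simpa [inv_smul_eq_iff, Set.smul_set_compl] using this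

theorem IsBond.edgeBoundary_nonempty (h : IsBond Y c) (hY : IsConnectedEdgeSet Y) :
    (edgeBoundary Y c).Nonempty :=
  Set.nonempty_iff_ne_empty.2 fun h' => (hY c h').elim h.nonempty.ne_empty h.ne_univ

theorem IsBond.sdiff_singleton {e : X × X} (h : IsBond Y c) (he : e ∈ edgeBoundary Y c) :
    IsBond (Y \ {e}) c where
  nonempty := h.nonempty
  ne_univ := h.ne_univ
  minimal c' hc' := by
    refine h.minimal c' fun q hq => ?_
    rw [edgeBoundary_sdiff_singleton, edgeBoundary_sdiff_singleton] at hc'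
    by_cases hqe : q = e
    · rwa [hqe]
    · exact (hc' ⟨hq, hqe⟩).1

theorem mem_boundedBonds_of_ncard_le (hc : IsBond Y c) (hf : (edgeBoundary Y c).Finite)
    (hk : (edgeBoundary Y c).ncard ≤ k) : c ∈ boundedBonds Y k :=
  ⟨hc, Set.encard_le_coe_iff_finite_ncard_le.2 ⟨hf, hk⟩⟩

theorem finite_edgeBoundary_of_mem_boundedBonds (h : c ∈ boundedBonds Y k) :
    (edgeBoundary Y c).Finite :=
  Set.finite_of_encard_le_coe h.2

theorem ncard_edgeBoundary_le_of_mem_boundedBonds (h : c ∈ boundedBonds Y k) :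
    (edgeBoundary Y c).ncard ≤ k :=
  (Set.encard_le_coe_iff_finite_ncard_le.1 h.2).2

theorem compl_mem_boundedBonds (h : c ∈ boundedBonds Y k) : cᶜ ∈ boundedBonds Y k :=
  ⟨h.1.compl, edgeBoundary_compl (Y := Y) (c := c) ▸ h.2⟩

theorem smul_mem_boundedBonds {G : Type*} [Group G] [MulAction G X] (hG : ∀ g : G, g • Y = Y)
    (h : c ∈ boundedBonds Y k) (g : G) : g • c ∈ boundedBonds Y k := by
  refine ⟨h.1.smul hG g, ?_⟩
  rw [edgeBoundary_smul hG, Set.encard_smul_set]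
  exact h.2

theorem sdiff_singleton_mem_boundedBonds {e : X × X} (h : c ∈ boundedBonds Y (k + 1))
    (he : e ∈ edgeBoundary Y c) : c ∈ boundedBonds (Y \ {e}) k := by
  refine ⟨h.1.sdiff_singleton he, ?_⟩
  have hk := h.2
  rw [← Set.encard_sdiff_singleton_add_one he, Nat.cast_add, Nat.cast_one] at hk
  rw [edgeBoundary_sdiff_singleton]
  exact (ENat.add_le_add_iff_right ENat.one_ne_top).1 hk

-- Deleting `e` either disconnects the graph, so that the bond is one of the two sides, or leaves
-- finitely many edges linking the ends of `e`, one of which lies in the smaller boundary.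
theorem IsConnectedEdgeSet.finite_setOf_mem_boundedBonds (hY : IsConnectedEdgeSet Y) (k : ℕ)
    (e : X × X) : {c | c ∈ boundedBonds Y k ∧ e ∈ edgeBoundary Y c}.Finite := by
  induction k generalizing Y e with
  | zero =>
    refine Set.finite_empty.subset ?_
    rintro c ⟨⟨-, hk⟩, he⟩
    rw [Nat.cast_zero, nonpos_iff_eq_zero, Set.encard_eq_zero] at hk
    rwa [hk] at he
  | succ k ih =>
    by_cases hY' : IsConnectedEdgeSet (Y \ {e})
    · obtain ⟨F, -, hf, hF⟩ := hY'.exists_finite_link e.1 e.2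
      refine (hf.biUnion fun p _ => ih hY' p).subset ?_
      rintro c ⟨hc, he⟩
      obtain ⟨p, hp, hpc⟩ := hF c he.2
      exact Set.mem_biUnion hp ⟨sdiff_singleton_mem_boundedBonds hc he, hpc⟩
    · simp only [IsConnectedEdgeSet, not_forall, not_or] at hY'
      obtain ⟨c', hc', hempty, huniv⟩ := hY'
      refine (Set.toFinite {c', c'ᶜ}).subset ?_
      rintro c ⟨⟨hc, -⟩, he⟩
      rw [edgeBoundary_sdiff_singleton, Set.sdiff_eq_empty] at hc'
      rcases hc.minimal c' (hc'.trans (Set.singleton_subset_iff.2 he)) with h | h | h | h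
      · exact absurd h hempty
      · exact absurd h huniv
      · exact Or.inl h.symm
      · exact Or.inr (h ▸ (compl_compl c).symm)

theorem IsConnectedEdgeSet.exists_edgeBoundary_ssubset (hY : IsConnectedEdgeSet Y)
    (hempty : c ≠ ∅) (huniv : c ≠ Set.univ) (hc : ¬ IsBond Y c) :
    ∃ d, edgeBoundary Y d ⊂ edgeBoundary Y c ∧
      edgeBoundary Y (symmDiff c d) ⊂ edgeBoundary Y c := by
  obtain ⟨d, hd, hd0, hd1, hdc, hdc'⟩ : ∃ d, edgeBoundary Y d ⊆ edgeBoundary Y c ∧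
      d ≠ ∅ ∧ d ≠ Set.univ ∧ d ≠ c ∧ d ≠ cᶜ := by
    by_contra! h
    refine hc ⟨Set.nonempty_iff_ne_empty.2 hempty, huniv, fun d hd => ?_⟩
    have := h d hd
    rw [Set.nonempty_iff_ne_empty] at this
    tauto
  obtain ⟨p, hp⟩ : (edgeBoundary Y d).Nonempty :=
    Set.nonempty_iff_ne_empty.2 fun h => (hY d h).elim hd0 hd1
  refine ⟨d, hd.ssubset_of_ne fun h => ?_, ?_⟩
  · exact (hY.eq_or_eq_compl_of_edgeBoundary_eq h).elim hdc hdc'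
  · rw [edgeBoundary_symmDiff]
    refine (Set.ssubset_iff_of_subset ?_).2 ⟨p, hd hp, fun h => ?_⟩
    · exact fun q hq => hq.elim And.left fun h => hd h.1
    · exact h.elim (fun h => h.2 hp) fun h => h.2 (hd hp)

theorem IsConnectedEdgeSet.determines_of_not_isBond (hY : IsConnectedEdgeSet Y)
    (hf : (edgeBoundary Y c).Finite) (hc : ¬ IsBond Y c) :
    Determines {b | IsBond Y b ∧ edgeBoundary Y b ⊂ edgeBoundary Y c} c := by
  induction hn : (edgeBoundary Y c).ncard using Nat.strong_induction_on generalizing c with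
  | _ n ih =>
    by_cases hempty : c = ∅
    · exact .of_forall (by simp [hempty])
    by_cases huniv : c = Set.univ
    · exact .of_forall (by simp [huniv])
    have of_ssubset : ∀ d, edgeBoundary Y d ⊂ edgeBoundary Y c →
        Determines {b | IsBond Y b ∧ edgeBoundary Y b ⊂ edgeBoundary Y c} d := by
      intro d hd
      by_cases hdb : IsBond Y d
      · exact .of_mem ⟨hdb, hd⟩
      · exact (ih _ (hn ▸ Set.ncard_lt_ncard hd hf) (hf.subset hd.1) hdb rfl).mono
          fun b hb => ⟨hb.1, hb.2.trans hd⟩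
    obtain ⟨d, hd, hcd⟩ := hY.exists_edgeBoundary_ssubset hempty huniv hc
    refine (of_ssubset _ hd).combine (of_ssubset _ hcd) fun x y => ?_
    simp only [Set.mem_symmDiff]
    tauto

theorem edgeBoundary_inter_subset_right
    (h : ∀ p ∈ edgeBoundary Y c, p.1 ∉ d ∧ p.2 ∉ d) :
    edgeBoundary Y (c ∩ d) ⊆ edgeBoundary Y d := by
  rintro p ⟨hp, hpcd⟩
  have hpc : ¬ (p.1 ∈ c ↔ p.2 ∈ c) → p.1 ∉ d ∧ p.2 ∉ d := fun hpc => h p ⟨hp, hpc⟩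
  simp only [Set.mem_inter_iff] at hpcd
  exact ⟨hp, by tauto⟩

theorem IsBond.exists_mem_edgeBoundary_of_crosses (hd : IsBond Y d) (hcd : Crosses c d) :
    ∃ p ∈ edgeBoundary Y c, p.1 ∈ d ∨ p.2 ∈ d := by
  by_contra! h
  rcases hd.minimal (c ∩ d) (edgeBoundary_inter_subset_right h) with h | h | h | h
  · exact hcd.1.ne_empty h
  · exact hd.ne_univ (Set.univ_subset_iff.1 (h ▸ Set.inter_subset_right))
  · obtain ⟨x, hx, hxd⟩ := hcd.2.2.1
    exact hx (h.symm ▸ hxd : x ∈ c ∩ d).1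
  · obtain ⟨x, hx, hxd⟩ := hcd.1
    exact (h ▸ ⟨hx, hxd⟩ : x ∈ dᶜ) hxd

/-- The end-vertices of the boundary edges of `c`. -/
def boundaryVertices (Y : Set (X × X)) (c : Set X) : Set X :=
  Prod.fst '' edgeBoundary Y c ∪ Prod.snd '' edgeBoundary Y c

theorem IsBond.exists_mem_boundaryVertices_of_crosses (hd : IsBond Y d) (hcd : Crosses c d) :
    ∃ x ∈ boundaryVertices Y c, x ∈ d := by
  obtain ⟨p, hp, h | h⟩ := hd.exists_mem_edgeBoundary_of_crosses hcd
  · exact ⟨_, Or.inl ⟨p, hp, rfl⟩, h⟩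
  · exact ⟨_, Or.inr ⟨p, hp, rfl⟩, h⟩

/-- The bonds with at most `k` boundary edges which cross `c`. -/
def crossings (Y : Set (X × X)) (k : ℕ) (c : Set X) : Set (Set X) :=
  {d | d ∈ boundedBonds Y k ∧ Crosses c d}

theorem IsConnectedEdgeSet.finite_crossings (hY : IsConnectedEdgeSet Y)
    (hc : (edgeBoundary Y c).Finite) : (crossings Y k c).Finite := by
  have hV : (boundaryVertices Y c).Finite := (hc.image _).union (hc.image _)
  choose F _ hf hFc using hY.exists_finite_link
  refine (hV.biUnion fun x _ => hV.biUnion fun y _ => (hf x y).biUnion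
    fun p _ => hY.finite_setOf_mem_boundedBonds k p).subset ?_
  rintro d ⟨hd, hcd⟩
  obtain ⟨x, hx, hxd⟩ := hd.1.exists_mem_boundaryVertices_of_crosses hcd
  obtain ⟨y, hy, hyd⟩ := hd.1.compl.exists_mem_boundaryVertices_of_crosses hcd.compl_right
  obtain ⟨p, hp, hpd⟩ := hFc x y d fun h => hyd (h.1 hxd)
  exact Set.mem_biUnion hx (Set.mem_biUnion hy (Set.mem_biUnion hp ⟨hd, hpd⟩))

theorem crossings_compl : crossings Y k cᶜ = crossings Y k c := by
  simp only [crossings, Crosses.compl_left_iff]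

theorem crossings_smul {G : Type*} [Group G] [MulAction G X] (hG : ∀ g : G, g • Y = Y) (g : G) :
    crossings Y k (g • c) = g • crossings Y k c := by
  ext d
  rw [Set.mem_smul_set_iff_inv_smul_mem]
  constructor
  · rintro ⟨h, h'⟩
    exact ⟨smul_mem_boundedBonds hG h _, by simpa using h'.smul g⁻¹⟩
  · rintro ⟨h, h'⟩
    exact ⟨by simpa using smul_mem_boundedBonds hG h g, by simpa using h'.smul g⟩

theorem ncard_crossings_inter_add_union_lt (hY : IsConnectedEdgeSet Y)
    (hc : (edgeBoundary Y c).Finite) (hd : d ∈ boundedBonds Y k) (hcd : Crosses c d) :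
    (crossings Y k (c ∩ d)).ncard + (crossings Y k (c ∪ d)).ncard <
      (crossings Y k c).ncard + (crossings Y k d).ncard := by
  have hcf := hY.finite_crossings (k := k) hc
  have hdf := hY.finite_crossings (k := k) (finite_edgeBoundary_of_mem_boundedBonds hd)
  have hf := hcf.union hdf
  have hunion : crossings Y k (c ∩ d) ∪ crossings Y k (c ∪ d) ⊂
      crossings Y k c ∪ crossings Y k d := by
    refine (Set.ssubset_iff_of_subset ?_).2 ⟨d, Or.inl ⟨hd, hcd⟩, ?_⟩
    · rintro e (⟨he, h⟩ | ⟨he, h⟩)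
      · exact (hcd.left_or_right_of_inter h).imp (⟨he, ·⟩) (⟨he, ·⟩)
      · exact (hcd.left_or_right_of_union h).imp (⟨he, ·⟩) (⟨he, ·⟩)
    · exact fun h => h.elim (fun h => Crosses.not_inter_right h.2)
        fun h => Crosses.not_union_right h.2
  have hinter : crossings Y k (c ∩ d) ∩ crossings Y k (c ∪ d) ⊆
      crossings Y k c ∩ crossings Y k d := by
    rintro e ⟨⟨he, h⟩, -, h'⟩
    exact (h.left_and_right_of_inter_of_union h').imp (⟨he, ·⟩) (⟨he, ·⟩)
  rw [← Set.ncard_union_add_ncard_inter _ _ (hf.subset (Set.subset_union_left.trans hunion.1))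
      (hf.subset (Set.subset_union_right.trans hunion.1)),
    ← Set.ncard_union_add_ncard_inter _ _ hcf hdf]
  exact add_lt_add_of_lt_of_le (Set.ncard_lt_ncard hunion hf)
    (Set.ncard_le_ncard hinter (hcf.subset Set.inter_subset_left))

/-- Cuts are ordered lexicographically by the number of boundary edges and the number of bonds,
with at most `k` boundary edges, which they cross. -/
noncomputable def cutNorm (Y : Set (X × X)) (k : ℕ) (c : Set X) : ℕ ×ₗ ℕ :=
  toLex ((edgeBoundary Y c).ncard, (crossings Y k c).ncard)

theorem cutNorm_compl : cutNorm Y k cᶜ = cutNorm Y k c := by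
  rw [cutNorm, cutNorm, edgeBoundary_compl, crossings_compl]

theorem cutNorm_smul {G : Type*} [Group G] [MulAction G X] (hG : ∀ g : G, g • Y = Y) (g : G) :
    cutNorm Y k (g • c) = cutNorm Y k c := by
  rw [cutNorm, cutNorm, edgeBoundary_smul hG, crossings_smul hG, Set.ncard_smul_set,
    Set.ncard_smul_set]

/-- The bonds with at most `k` boundary edges of norm less than `v`. -/
def smallerBonds (Y : Set (X × X)) (k : ℕ) (v : ℕ ×ₗ ℕ) : Set (Set X) :=
  {d | d ∈ boundedBonds Y k ∧ cutNorm Y k d < v}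

theorem smul_mem_smallerBonds {G : Type*} [Group G] [MulAction G X] (hG : ∀ g : G, g • Y = Y)
    {v : ℕ ×ₗ ℕ} (h : c ∈ smallerBonds Y k v) (g : G) : g • c ∈ smallerBonds Y k v :=
  ⟨smul_mem_boundedBonds hG h.1 g, (cutNorm_smul hG g).trans_lt h.2⟩

/-- The bonds with at most `k` boundary edges which are not determined by smaller ones. They
determine all other cuts with at most `k` boundary edges, and no two of them cross. -/
def irreducibleBonds (Y : Set (X × X)) (k : ℕ) : Set (Set X) :=
  {c | c ∈ boundedBonds Y k ∧ ¬ Determines (smallerBonds Y k (cutNorm Y k c)) c}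

theorem determines_of_cutNorm_lt (hY : IsConnectedEdgeSet Y) (hc : (edgeBoundary Y c).Finite)
    (hd : d ∈ boundedBonds Y k) (h : cutNorm Y k c < cutNorm Y k d) :
    Determines (smallerBonds Y k (cutNorm Y k d)) c := by
  have hcd : (edgeBoundary Y c).ncard ≤ (edgeBoundary Y d).ncard := by
    rw [cutNorm, cutNorm, Prod.Lex.toLex_lt_toLex] at h
    exact h.elim le_of_lt fun h => h.1.le
  have hck := hcd.trans (ncard_edgeBoundary_le_of_mem_boundedBonds hd)
  by_cases hcb : IsBond Y c
  · exact .of_mem ⟨mem_boundedBonds_of_ncard_le hcb hc hck, h⟩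
  · refine (hY.determines_of_not_isBond hc hcb).mono fun e ⟨he, hec⟩ => ?_
    have hlt := Set.ncard_lt_ncard hec hc
    refine ⟨mem_boundedBonds_of_ncard_le he (hc.subset hec.1) (hlt.le.trans hck), ?_⟩
    rw [cutNorm, cutNorm, Prod.Lex.toLex_lt_toLex]
    exact Or.inl (hlt.trans_le hcd)

theorem determines_corners (hY : IsConnectedEdgeSet Y) (hc : c ∈ boundedBonds Y k)
    (hd : d ∈ boundedBonds Y k) (hcd : Crosses c d) :
    (Determines (smallerBonds Y k (cutNorm Y k c)) (c ∩ d) ∨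
      Determines (smallerBonds Y k (cutNorm Y k c)) (c ∪ d)) ∨
    (Determines (smallerBonds Y k (cutNorm Y k d)) (c ∩ d) ∧
      Determines (smallerBonds Y k (cutNorm Y k d)) (c ∪ d)) := by
  have hcf := finite_edgeBoundary_of_mem_boundedBonds hc
  have hdf := finite_edgeBoundary_of_mem_boundedBonds hd
  have hinter := (hcf.union hdf).subset edgeBoundary_inter_subset
  have hunion := (hcf.union hdf).subset edgeBoundary_union_subset
  have hnorm : (cutNorm Y k (c ∩ d) < cutNorm Y k c ∨ cutNorm Y k (c ∪ d) < cutNorm Y k c) ∨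
      (cutNorm Y k (c ∩ d) < cutNorm Y k d ∧ cutNorm Y k (c ∪ d) < cutNorm Y k d) := by
    have hedges := ncard_edgeBoundary_inter_add_union hcf hdf
    have hcross := ncard_crossings_inter_add_union_lt hY hcf hd hcd
    simp only [cutNorm, Prod.Lex.toLex_lt_toLex]
    lia
  exact hnorm.imp
    (Or.imp (determines_of_cutNorm_lt hY hinter hc) (determines_of_cutNorm_lt hY hunion hc))
    (And.imp (determines_of_cutNorm_lt hY hinter hd) (determines_of_cutNorm_lt hY hunion hd))

theorem not_crosses_of_mem_irreducibleBonds (hY : IsConnectedEdgeSet Y)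
    (hc : c ∈ irreducibleBonds Y k) (hd : d ∈ irreducibleBonds Y k) : ¬ Crosses c d := by
  wlog hle : cutNorm Y k c ≤ cutNorm Y k d generalizing c d
  · exact fun h => this hd hc (le_of_not_ge hle) h.symm
  intro hcd
  have hmono (x) (hx : Determines (smallerBonds Y k (cutNorm Y k c)) x) :
      Determines (smallerBonds Y k (cutNorm Y k d)) x :=
    hx.mono fun e he => ⟨he.1, he.2.trans_le hle⟩
  have hc_inter {S} (h : Determines S (c ∩ d)) (h' : Determines S (c ∩ dᶜ)) : Determines S c :=
    h.combine h' fun x y => by grind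
  have hc_union {S} (h : Determines S (c ∪ d)) (h' : Determines S (c ∪ dᶜ)) : Determines S c :=
    h.combine h' fun x y => by grind
  have hd_inter {S} (h : Determines S (c ∩ d)) (h' : Determines S (c ∪ dᶜ)) : Determines S d :=
    h.combine h' fun x y => by grind
  have hd_union {S} (h : Determines S (c ∪ d)) (h' : Determines S (c ∩ dᶜ)) : Determines S d :=
    h.combine h' fun x y => by grind
  have h := determines_corners hY hc.1 hd.1 hcd
  have h' := determines_corners hY hc.1 (compl_mem_boundedBonds hd.1) hcd.compl_right
  rw [cutNorm_compl] at h'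
  rcases h with (hi | hu) | ⟨hi, hu⟩ <;> rcases h' with (hi' | hu') | ⟨hi', hu'⟩
  · exact hc.2 (hc_inter hi hi')
  · exact hd.2 (hd_inter (hmono _ hi) (hmono _ hu'))
  · exact hd.2 (hd_inter (hmono _ hi) hu')
  · exact hd.2 (hd_union (hmono _ hu) (hmono _ hi'))
  · exact hc.2 (hc_union hu hu')
  · exact hd.2 (hd_union (hmono _ hu) hi')
  · exact hd.2 (hd_union hu (hmono _ hi'))
  · exact hd.2 (hd_inter hi (hmono _ hu'))
  · exact hd.2 (hd_inter hi hu')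

theorem determines_irreducibleBonds_of_mem (hc : c ∈ boundedBonds Y k) :
    Determines (irreducibleBonds Y k) c := by
  induction hn : cutNorm Y k c using WellFoundedLT.induction generalizing c with
  | _ v ih =>
    by_cases h : c ∈ irreducibleBonds Y k
    · exact .of_mem h
    · have h' : Determines (smallerBonds Y k (cutNorm Y k c)) c := by
        by_contra h'
        exact h ⟨hc, h'⟩
      exact h'.trans fun e he => ih _ (hn ▸ he.2) he.1 rfl

theorem determines_irreducibleBonds (hY : IsConnectedEdgeSet Y) (hf : (edgeBoundary Y c).Finite)
    (hk : (edgeBoundary Y c).ncard ≤ k) : Determines (irreducibleBonds Y k) c := by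
  by_cases hc : IsBond Y c
  · exact determines_irreducibleBonds_of_mem (mem_boundedBonds_of_ncard_le hc hf hk)
  · exact (hY.determines_of_not_isBond hf hc).trans fun e he =>
      determines_irreducibleBonds_of_mem <| mem_boundedBonds_of_ncard_le he.1
        (hf.subset he.2.1) ((Set.ncard_le_ncard he.2.1 hf).trans hk)

theorem compl_mem_irreducibleBonds (h : c ∈ irreducibleBonds Y k) :
    cᶜ ∈ irreducibleBonds Y k := by
  refine ⟨compl_mem_boundedBonds h.1, fun h' => h.2 ?_⟩
  rw [cutNorm_compl] at h'
  exact h'.of_compl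

theorem finite_setOf_mem_irreducibleBonds (hY : IsConnectedEdgeSet Y) (x y : X) :
    {c | c ∈ irreducibleBonds Y k ∧ ¬ (x ∈ c ↔ y ∈ c)}.Finite := by
  obtain ⟨F, -, hf, hF⟩ := hY.exists_finite_link x y
  refine (hf.biUnion fun p _ => hY.finite_setOf_mem_boundedBonds k p).subset ?_
  rintro c ⟨⟨hc, -⟩, hxy⟩
  obtain ⟨p, hp, hpc⟩ := hF c hxy
  exact Set.mem_biUnion hp ⟨hc, hpc⟩

theorem smul_mem_irreducibleBonds {G : Type*} [Group G] [MulAction G X] (hG : ∀ g : G, g • Y = Y)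
    (h : c ∈ irreducibleBonds Y k) (g : G) : g • c ∈ irreducibleBonds Y k := by
  refine ⟨smul_mem_boundedBonds hG h.1 g, fun h' => h.2 ?_⟩
  have h' := h'.smul g⁻¹
  rw [inv_smul_smul, cutNorm_smul hG] at h'
  refine h'.mono fun e he => ?_
  rw [Set.mem_smul_set_iff_inv_smul_mem, inv_inv] at he
  simpa using smul_mem_smallerBonds hG he g⁻¹

theorem finite_setOf_smul_eq_of_mem_irreducibleBonds {G : Type*} [Group G] [MulAction G X]
    (hG : ∀ g : G, g • Y = Y) (hY : IsConnectedEdgeSet Y)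
    (hst : ∀ p ∈ Y, {g : G | g • p = p}.Finite) (h : c ∈ irreducibleBonds Y k) :
    {g : G | g • c = c}.Finite := by
  obtain ⟨p, hp⟩ := h.1.1.edgeBoundary_nonempty hY
  refine ((finite_edgeBoundary_of_mem_boundedBonds h.1).biUnion fun q _ =>
    finite_setOf_smul_eq_of_finite_stabilizer (hst p hp.1) q).subset fun g hg => ?_
  have hgp := Set.smul_mem_smul_set (a := g) hp
  rw [← edgeBoundary_smul hG, hg] at hgp
  exact Set.mem_biUnion hgp rfl

end Bonds

/-! ### The tree of a nested family of sets -/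

/-- A nested family of proper nonempty sets, closed under complements, any two points being
separated by only finitely many members. -/
structure IsTreeSet {X : Type*} (E : Set (Set X)) : Prop where
  nonempty : ∀ e ∈ E, e.Nonempty
  compl_mem : ∀ e ∈ E, eᶜ ∈ E
  not_crosses : ∀ c ∈ E, ∀ d ∈ E, ¬ Crosses c d
  finite_separating : ∀ x y, {e ∈ E | ¬ (x ∈ e ↔ y ∈ e)}.Finite

/-- An orientation of `E`: a consistent choice of one set from each complementary pair, which
differs only finitely from the choice of the sets containing a given point. -/
structure IsOrientation {X : Type*} (E o : Set (Set X)) : Prop where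
  subset : o ⊆ E
  compl_mem_iff : ∀ e ∈ E, eᶜ ∈ o ↔ e ∉ o
  mem_of_subset : ∀ e ∈ o, ∀ f ∈ E, e ⊆ f → f ∈ o
  finite : ∀ x, {e ∈ o | x ∉ e}.Finite

/-- The orientations `o` and `insert eᶜ (o \ {e})` are the two ends of the edge `e` of the tree
of `E`. -/
structure Borders {X : Type*} (E o : Set (Set X)) (e : Set X) : Prop where
  isOrientation : IsOrientation E o
  mem : e ∈ o
  isOrientation_flip : IsOrientation E (insert eᶜ (o \ {e}))

/-- The vertices of the tree of `E`: the orientations, and the midpoints of the edges, the midpoint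
between the ends `o` and `insert eᶜ (o \ {e})` of `e` being encoded as `o \ {e}`. -/
def TreeVertex {X : Type*} (E : Set (Set X)) : Type _ :=
  {s : Set (Set X) // IsOrientation E s ∨ ∃ o e, Borders E o e ∧ s = o \ {e}}

namespace TreeVertex

variable {X : Type*} {E o : Set (Set X)} {e : Set X}

/-- An orientation as a vertex of the tree. -/
def ofOrientation (h : IsOrientation E o) : TreeVertex E := ⟨o, Or.inl h⟩

/-- The midpoint of an edge as a vertex of the tree. -/
def midpoint (h : Borders E o e) : TreeVertex E := ⟨o \ {e}, Or.inr ⟨o, e, h, rfl⟩⟩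

/-- The vertex `s` is an end of the edge with midpoint `t`. -/
def IsEnd (s t : TreeVertex E) : Prop := ∃ e, Borders E s.1 e ∧ t.1 = s.1 \ {e}

theorem isEnd_midpoint (h : Borders E o e) : IsEnd (ofOrientation h.isOrientation) (midpoint h) :=
  ⟨e, h, rfl⟩

end TreeVertex

/-- The tree of `E`, with every edge subdivided: the ends of an edge are joined to its midpoint. -/
def treeOf {X : Type*} (E : Set (Set X)) : SimpleGraph (TreeVertex E) :=
  SimpleGraph.fromRel TreeVertex.IsEnd

section TreeSet

open TreeVertex

variable {X : Type*} {E o o' : Set (Set X)} {e f : Set X}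

theorem IsTreeSet.nested (hE : IsTreeSet E) (he : e ∈ E) (hf : f ∈ E) :
    e ⊆ f ∨ e ⊆ fᶜ ∨ eᶜ ⊆ f ∨ eᶜ ⊆ fᶜ := by
  have := hE.not_crosses e he f hf
  simp only [Crosses, not_and_or, Set.not_nonempty_iff_eq_empty, ← Set.disjoint_iff_inter_eq_empty,
    ← Set.subset_compl_iff_disjoint_right, compl_compl] at this
  tauto

theorem IsTreeSet.ne_compl (hE : IsTreeSet E) (he : e ∈ E) : e ≠ eᶜ := by
  obtain ⟨x, hx⟩ := hE.nonempty e he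
  exact fun h => (h ▸ hx : x ∈ eᶜ) hx

theorem IsTreeSet.isOrientation (hE : IsTreeSet E) (x : X) : IsOrientation E {e ∈ E | x ∈ e} where
  subset := Set.sep_subset _ _
  compl_mem_iff e he := by simp [he, hE.compl_mem e he]
  mem_of_subset e he f hf hef := ⟨hf, hef he.2⟩
  finite y := (hE.finite_separating x y).subset fun e ⟨⟨he, hx⟩, hy⟩ => ⟨he, by tauto⟩

theorem IsOrientation.eq_of_subset (ho : IsOrientation E o) (ho' : IsOrientation E o')
    (h : o ⊆ o') : o = o' := by
  refine h.antisymm fun e he => ?_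
  by_contra heo
  have heE := ho'.subset he
  exact (ho'.compl_mem_iff e heE).1 (h ((ho.compl_mem_iff e heE).2 heo)) he

theorem IsOrientation.compl_notMem (ho : IsOrientation E o) (he : e ∈ o) : eᶜ ∉ o :=
  fun h => (ho.compl_mem_iff e (ho.subset he)).1 h he

theorem IsOrientation.borders (hE : IsTreeSet E) (ho : IsOrientation E o) (he : e ∈ o)
    (hmin : ∀ f ∈ o, f ⊆ e → f = e) : Borders E o e := by
  have heE := ho.subset he
  refine ⟨ho, he, ?_, ?_, ?_, ?_⟩
  · exact Set.insert_subset (hE.compl_mem e heE) (Set.sdiff_subset.trans ho.subset)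
  · intro f hf
    by_cases hfe : f = e
    · simp [hfe, hE.ne_compl heE]
    by_cases hfe' : f = eᶜ
    · simp [hfe', hE.ne_compl heE]
    have hfe'' : fᶜ ≠ e := fun h => hfe' (by rw [← h, compl_compl])
    simp [hfe, hfe', hfe'', ho.compl_mem_iff f hf]
  · rintro g (rfl | ⟨hg, hge⟩) f hf hgf
    · by_cases hfe : f = eᶜ
      · exact Or.inl hfe
      refine Or.inr ⟨?_, fun hfe => ?_⟩
      · by_contra hfo
        have := hmin fᶜ ((ho.compl_mem_iff f hf).2 hfo) (Set.compl_subset_comm.1 hgf)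
        exact hfe (by rw [← this, compl_compl])
      · obtain ⟨x, hx⟩ := hE.nonempty _ (hE.compl_mem e heE)
        exact hx (hfe ▸ hgf hx)
    · exact Or.inr ⟨ho.mem_of_subset g hg f hf hgf, fun hfe => hge (hmin g hg (hfe ▸ hgf))⟩
  · refine fun x => ((ho.finite x).insert eᶜ).subset ?_
    rintro f ⟨rfl | hf, hx⟩
    · exact Or.inl rfl
    · exact Or.inr ⟨hf.1, hx⟩

theorem IsOrientation.exists_borders (hE : IsTreeSet E) (ho : IsOrientation E o) {x : X}
    (hox : o ≠ {e ∈ E | x ∈ e}) : ∃ e, Borders E o e ∧ x ∉ e := by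
  have hne : {e ∈ o | x ∉ e}.Nonempty := by
    by_contra! h
    refine hox (ho.eq_of_subset (hE.isOrientation x) fun e he => ⟨ho.subset he, ?_⟩)
    by_contra hx
    exact (h ▸ ⟨he, hx⟩ : e ∈ (∅ : Set (Set X)))
  obtain ⟨e, he⟩ := (ho.finite x).exists_minimal hne
  refine ⟨e, ho.borders hE he.prop.1 fun f hf hfe => ?_, he.prop.2⟩
  exact hfe.antisymm (he.le_of_le ⟨hf, fun hx => he.prop.2 (hfe hx)⟩ hfe)

theorem Borders.mem_iff (hE : IsTreeSet E) (h : Borders E o e) (hf : f ∈ E) :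
    f ∈ o ↔ e ⊆ f ∨ eᶜ ⊂ f := by
  have ho := h.isOrientation
  have mem_of_ssubset : ∀ f ∈ E, eᶜ ⊂ f → f ∈ o := by
    intro f hf hef
    rcases h.isOrientation_flip.mem_of_subset eᶜ (Set.mem_insert _ _) f hf hef.1 with h' | h'
    · exact absurd h'.symm hef.ne
    · exact h'.1
  refine ⟨fun hfo => ?_, ?_⟩
  · by_contra! hcon
    rcases hE.nested (ho.subset h.mem) hf with hef | hef | hef | hef
    · exact hcon.1 hef
    · exact ho.compl_notMem hfo (ho.mem_of_subset e h.mem _ (hE.compl_mem f hf) hef)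
    · by_cases hfe : eᶜ = f
      · exact ho.compl_notMem h.mem (hfe ▸ hfo)
      · exact hcon.2 (hef.ssubset_of_ne hfe)
    · exact ho.compl_notMem hfo <| mem_of_ssubset _ (hE.compl_mem f hf) <|
        hef.ssubset_of_ne fun hef => hcon.1 (compl_injective hef).le
  · rintro (hef | hef)
    · exact ho.mem_of_subset e h.mem f hf hef
    · exact mem_of_ssubset f hf hef

theorem Borders.unique (hE : IsTreeSet E) (h : Borders E o e) (h' : Borders E o' e) : o = o' :=
  h.isOrientation.eq_of_subset h'.isOrientation fun f hf => by
    have hfE := h.isOrientation.subset hf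
    rwa [h'.mem_iff hE hfE, ← h.mem_iff hE hfE]

theorem Borders.finite_setOf (hE : IsTreeSet E) (e : Set X) : {o | Borders E o e}.Finite :=
  Set.Subsingleton.finite fun _ h _ h' => h.unique hE h'

theorem Borders.not_isOrientation_sdiff (h : Borders E o e) : ¬ IsOrientation E (o \ {e}) :=
  fun h' => h.isOrientation.compl_notMem h.mem
    ((h'.compl_mem_iff e (h.isOrientation.subset h.mem)).2 fun he => he.2 rfl).1

theorem Borders.flip_sdiff_singleton (h : Borders E o e) :
    insert eᶜ (o \ {e}) \ {eᶜ} = o \ {e} := by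
  rw [Set.insert_sdiff_self_of_notMem]
  exact fun hec => h.isOrientation.compl_notMem h.mem hec.1

theorem Borders.flip (h : Borders E o e) : Borders E (insert eᶜ (o \ {e})) eᶜ where
  isOrientation := h.isOrientation_flip
  mem := Set.mem_insert _ _
  isOrientation_flip := by
    rw [h.flip_sdiff_singleton, compl_compl, Set.insert_sdiff_self_of_mem h.mem]
    exact h.isOrientation

theorem treeOf_adj {s t : TreeVertex E} : (treeOf E).Adj s t ↔ IsEnd s t ∨ IsEnd t s := by
  rw [treeOf, SimpleGraph.fromRel_adj, and_iff_right_iff_imp]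
  rintro (⟨e, h, h'⟩ | ⟨e, h, h'⟩) rfl
  · exact h.not_isOrientation_sdiff (h' ▸ h.isOrientation)
  · exact h.not_isOrientation_sdiff (h' ▸ h.isOrientation)

theorem TreeVertex.IsEnd.adj {s t : TreeVertex E} (h : IsEnd s t) : (treeOf E).Adj s t :=
  treeOf_adj.2 (Or.inl h)

theorem Borders.reachable_flip (h : Borders E o e) :
    (treeOf E).Reachable (ofOrientation h.isOrientation_flip) (ofOrientation h.isOrientation) := by
  have hend : IsEnd (ofOrientation h.isOrientation_flip) (midpoint h) :=
    ⟨eᶜ, h.flip, h.flip_sdiff_singleton.symm⟩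
  exact hend.adj.reachable.trans (isEnd_midpoint h).adj.symm.reachable

theorem Borders.ncard_flip_lt (hE : IsTreeSet E) (h : Borders E o e) {x : X} (hx : x ∉ e) :
    {f ∈ insert eᶜ (o \ {e}) | x ∉ f}.ncard < {f ∈ o | x ∉ f}.ncard := by
  refine Set.ncard_lt_ncard ((Set.ssubset_iff_of_subset ?_).2 ⟨e, ⟨h.mem, hx⟩, ?_⟩)
    (h.isOrientation.finite x)
  · rintro f ⟨rfl | hf, hxf⟩
    · exact absurd hx hxf
    · exact ⟨hf.1, hxf⟩
  · rintro ⟨he | he, -⟩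
    · exact hE.ne_compl (h.isOrientation.subset h.mem) he
    · exact he.2 rfl

theorem IsTreeSet.reachable_ofOrientation (hE : IsTreeSet E) (x : X) (ho : IsOrientation E o) :
    (treeOf E).Reachable (ofOrientation (hE.isOrientation x)) (ofOrientation ho) := by
  induction hn : {e ∈ o | x ∉ e}.ncard using Nat.strong_induction_on generalizing o with
  | _ n ih =>
    by_cases hox : o = {e ∈ E | x ∈ e}
    · subst hox
      exact SimpleGraph.Reachable.refl _
    · obtain ⟨e, he, hx⟩ := ho.exists_borders hE hox
      exact (ih _ (hn ▸ he.ncard_flip_lt hE hx) he.isOrientation_flip rfl).trans he.reachable_flip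

theorem IsTreeSet.treeOf_connected [Nonempty X] (hE : IsTreeSet E) : (treeOf E).Connected := by
  obtain ⟨x⟩ := ‹Nonempty X›
  refine (SimpleGraph.connected_iff_exists_forall_reachable _).2
    ⟨ofOrientation (hE.isOrientation x), ?_⟩
  rintro ⟨s, hs | ⟨o, e, he, rfl⟩⟩
  · exact hE.reachable_ofOrientation x hs
  · exact (hE.reachable_ofOrientation x he.isOrientation).trans (isEnd_midpoint he).adj.reachable

theorem IsTreeSet.eq_and_eq_of_adj_of_mem_of_notMem (hE : IsTreeSet E) {s t u v : TreeVertex E}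
    (h : Borders E s.1 e) (ht : t.1 = s.1 \ {e}) (huv : (treeOf E).Adj u v) (hu : e ∈ u.1)
    (hv : e ∉ v.1) : u = s ∧ v = t := by
  rcases treeOf_adj.1 huv with ⟨f, hf, hvf⟩ | ⟨f, -, huf⟩
  · obtain rfl : e = f := by
      by_contra hef
      exact hv (hvf ▸ ⟨hu, hef⟩)
    have hus : u = s := Subtype.ext (hf.unique hE h)
    exact ⟨hus, Subtype.ext (by rw [hvf, ht, hus])⟩
  · exact absurd (huf ▸ hu : e ∈ v.1 \ {f}).1 hv

theorem IsTreeSet.isBridge_of_isEnd (hE : IsTreeSet E) {s t : TreeVertex E} (hst : IsEnd s t) :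
    (treeOf E).IsBridge s(s, t) := by
  obtain ⟨e, h, ht⟩ := hst
  rw [SimpleGraph.isBridge_iff]
  rintro ⟨w⟩
  have mem_of_walk : ∀ {u v : TreeVertex E},
      ((treeOf E) \ SimpleGraph.fromEdgeSet {s(s, t)}).Walk u v → e ∈ u.1 → e ∈ v.1 := by
    intro u v w
    induction w with
    | nil => exact id
    | cons hadj _ ih =>
      refine fun hu => ih ?_
      rw [SimpleGraph.sdiff_adj, SimpleGraph.fromEdgeSet_adj] at hadj
      by_contra hv
      obtain ⟨rfl, rfl⟩ := hE.eq_and_eq_of_adj_of_mem_of_notMem h ht hadj.1 hu hv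
      exact hadj.2 ⟨rfl, hadj.1.ne⟩
  exact (ht ▸ mem_of_walk w h.mem : e ∈ s.1 \ {e}).2 rfl

theorem IsTreeSet.treeOf_isAcyclic (hE : IsTreeSet E) : (treeOf E).IsAcyclic := by
  rw [SimpleGraph.isAcyclic_iff_forall_adj_isBridge]
  intro s t hst
  rcases treeOf_adj.1 hst with h | h
  · exact hE.isBridge_of_isEnd h
  · exact Sym2.eq_swap ▸ hE.isBridge_of_isEnd h

end TreeSet

/-! ### Group actions on the tree of a nested family -/

/-- The group `G` acts through `ρ` on the tree `T` without inversions, with finitely many orbits of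
vertices and edges, and with finite edge stabilizers. -/
structure IsCocompactTreeAction {G W : Type*} [Group G] (T : SimpleGraph W)
    (ρ : G →* Equiv.Perm W) : Prop where
  isTree : T.IsTree
  adj_iff : ∀ g u v, T.Adj (ρ g u) (ρ g v) ↔ T.Adj u v
  not_inversion : ∀ g u v, T.Adj u v → ¬ (ρ g u = v ∧ ρ g v = u)
  finite_vertex_orbits : ∃ s : Set W, s.Finite ∧ ∀ w, ∃ w' ∈ s, ∃ g, ρ g w' = w
  finite_edge_orbits : ∃ s : Set (W × W), s.Finite ∧ ∀ u v, T.Adj u v →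
    ∃ p ∈ s, ∃ g, (ρ g p.1 = u ∧ ρ g p.2 = v) ∨ (ρ g p.1 = v ∧ ρ g p.2 = u)
  finite_edge_stabilizer : ∀ u v, T.Adj u v → {g | ρ g u = u ∧ ρ g v = v}.Finite

namespace IsCocompactTreeAction

universe w

variable {G W : Type*} [Group G] {T : SimpleGraph W} {ρ : G →* Equiv.Perm W}

theorem small (h : IsCocompactTreeAction T ρ) [Small.{w} G] : Small.{w} W := by
  obtain ⟨s, hs, hsW⟩ := h.finite_vertex_orbits
  have := hs.to_subtype
  refine small_of_surjective (f := fun p : s × G => ρ p.2 p.1) fun w => ?_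
  obtain ⟨w', hw', g, rfl⟩ := hsW w
  exact ⟨(⟨w', hw'⟩, g), rfl⟩

theorem congr (h : IsCocompactTreeAction T ρ) {W' : Type*} (e : W ≃ W') :
    IsCocompactTreeAction (T.comap e.symm) (e.permCongrHom.toMonoidHom.comp ρ) := by
  have hρ : ∀ g w, (e.permCongrHom.toMonoidHom.comp ρ) g w = e (ρ g (e.symm w)) :=
    fun g w => rfl
  refine ⟨(SimpleGraph.Iso.comap e.symm T).isTree_iff.2 h.isTree, ?_, ?_, ?_, ?_, ?_⟩
  · simp [h.adj_iff]
  · exact fun g u v huv hg =>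
      h.not_inversion g _ _ huv ⟨e.eq_symm_apply.2 hg.1, e.eq_symm_apply.2 hg.2⟩
  · obtain ⟨s, hs, hsW⟩ := h.finite_vertex_orbits
    refine ⟨e '' s, hs.image _, fun w => ?_⟩
    obtain ⟨w', hw', g, hg⟩ := hsW (e.symm w)
    exact ⟨e w', ⟨w', hw', rfl⟩, g, by simp [hg]⟩
  · obtain ⟨s, hs, hsW⟩ := h.finite_edge_orbits
    refine ⟨Prod.map e e '' s, hs.image _, fun u v huv => ?_⟩
    obtain ⟨p, hp, g, hg⟩ := hsW _ _ huv
    exact ⟨_, ⟨p, hp, rfl⟩, g, by simpa [hρ, ← Equiv.eq_symm_apply] using hg⟩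
  · intro u v huv
    simpa [hρ, ← Equiv.eq_symm_apply] using h.finite_edge_stabilizer _ _ huv

end IsCocompactTreeAction

/-- A tree set which is invariant under `G`, consists of finitely many orbits, and has finite
stabilizers. -/
structure IsCocompactTreeSet (G : Type*) {X : Type*} [Group G] [MulAction G X]
    (E : Set (Set X)) : Prop extends IsTreeSet E where
  smul_mem : ∀ g : G, ∀ e ∈ E, g • e ∈ E
  finite_orbits : ∃ F : Set (Set X), F.Finite ∧ ∀ e ∈ E, ∃ f ∈ F, ∃ g : G, g • f = e
  finite_stabilizer : ∀ e ∈ E, {g : G | g • e = e}.Finite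

section Action

open TreeVertex

variable {G X : Type*} [Group G] [MulAction G X] {E o : Set (Set X)} {e : Set X}

theorem IsOrientation.smul (hG : ∀ g : G, ∀ e ∈ E, g • e ∈ E) (ho : IsOrientation E o) (g : G) :
    IsOrientation E (g • o) where
  subset := by
    rintro _ ⟨e, he, rfl⟩
    exact hG g e (ho.subset he)
  compl_mem_iff e he := by
    rw [Set.mem_smul_set_iff_inv_smul_mem, Set.mem_smul_set_iff_inv_smul_mem, Set.smul_set_compl]
    exact ho.compl_mem_iff _ (hG _ e he)
  mem_of_subset e he f hf hef := by
    rw [Set.mem_smul_set_iff_inv_smul_mem] at he ⊢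
    exact ho.mem_of_subset _ he _ (hG _ f hf) (Set.smul_set_mono hef)
  finite x := by
    refine ((ho.finite (g⁻¹ • x)).smul_set (a := g)).subset fun e ⟨he, hx⟩ => ?_
    rw [Set.mem_smul_set_iff_inv_smul_mem] at he ⊢
    exact ⟨he, by rwa [Set.smul_mem_smul_set_iff]⟩

theorem Borders.smul (hG : ∀ g : G, ∀ e ∈ E, g • e ∈ E) (h : Borders E o e) (g : G) :
    Borders E (g • o) (g • e) where
  isOrientation := h.isOrientation.smul hG g
  mem := Set.smul_mem_smul_set h.mem
  isOrientation_flip := by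
    have := h.isOrientation_flip.smul hG g
    rwa [Set.smul_set_insert, Set.smul_set_sdiff, Set.smul_set_singleton,
      Set.smul_set_compl] at this

theorem smul_sdiff_singleton {α : Type*} [MulAction G α] (g : G) (s : Set α) (a : α) :
    g • (s \ {a}) = (g • s) \ {g • a} := by
  rw [Set.smul_set_sdiff, Set.smul_set_singleton]

/-- The action on the tree of an invariant family of sets. -/
def treeAction (hG : ∀ g : G, ∀ e ∈ E, g • e ∈ E) : G →* Equiv.Perm (TreeVertex E) :=
  MonoidHom.toHomPerm
    { toFun := fun g s => ⟨g • s.1, s.2.imp (fun h => h.smul hG g) fun ⟨o, e, h, hs⟩ =>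
        ⟨g • o, g • e, h.smul hG g, hs ▸ smul_sdiff_singleton g o e⟩⟩
      map_one' := funext fun s => Subtype.ext (one_smul G s.1)
      map_mul' := fun g g' => funext fun s => Subtype.ext (mul_smul g g' s.1) }

theorem treeAction_coe (hG : ∀ g : G, ∀ e ∈ E, g • e ∈ E) (g : G) (s : TreeVertex E) :
    (treeAction hG g s).1 = g • s.1 := rfl

theorem treeAction_ofOrientation_eq_iff {o' : Set (Set X)} (hG : ∀ g : G, ∀ e ∈ E, g • e ∈ E)
    (g : G) (ho : IsOrientation E o) (ho' : IsOrientation E o') :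
    treeAction hG g (ofOrientation ho) = ofOrientation ho' ↔ g • o = o' :=
  Subtype.ext_iff

theorem TreeVertex.IsEnd.treeAction {s t : TreeVertex E} (hG : ∀ g : G, ∀ e ∈ E, g • e ∈ E)
    (h : IsEnd s t) (g : G) : IsEnd (treeAction hG g s) (treeAction hG g t) := by
  obtain ⟨e, he, ht⟩ := h
  exact ⟨g • e, he.smul hG g, by rw [treeAction_coe, treeAction_coe, ht, smul_sdiff_singleton]⟩

theorem treeAction_adj (hG : ∀ g : G, ∀ e ∈ E, g • e ∈ E) {s t : TreeVertex E}
    (h : (treeOf E).Adj s t) (g : G) : (treeOf E).Adj (treeAction hG g s) (treeAction hG g t) :=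
  treeOf_adj.2 ((treeOf_adj.1 h).imp (·.treeAction hG g) (·.treeAction hG g))

theorem treeAction_adj_iff (hG : ∀ g : G, ∀ e ∈ E, g • e ∈ E) (g : G) (s t : TreeVertex E) :
    (treeOf E).Adj (treeAction hG g s) (treeAction hG g t) ↔ (treeOf E).Adj s t :=
  ⟨fun h => by simpa using treeAction_adj hG h g⁻¹, fun h => treeAction_adj hG h g⟩

theorem treeAction_ne_of_isEnd (hG : ∀ g : G, ∀ e ∈ E, g • e ∈ E) {s t : TreeVertex E}
    (h : IsEnd s t) (g : G) : treeAction hG g s ≠ t := by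
  obtain ⟨e, he, ht⟩ := h
  intro hst
  have hst : g • s.1 = t.1 := congrArg Subtype.val hst
  exact he.not_isOrientation_sdiff (ht ▸ hst ▸ he.isOrientation.smul hG g)

namespace IsCocompactTreeSet

variable (hE : IsCocompactTreeSet G E)
include hE

theorem smul_sep_mem (g : G) (x : X) : g • {e ∈ E | x ∈ e} = {e ∈ E | g • x ∈ e} := by
  ext e
  have : g⁻¹ • e ∈ E ↔ e ∈ E := ⟨fun h => by simpa using hE.smul_mem g _ h, hE.smul_mem _ e⟩
  simp [Set.mem_smul_set_iff_inv_smul_mem, this]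

theorem finite_stabilizer_of_isEnd {s t : TreeVertex E} (h : IsEnd s t) :
    {g | treeAction hE.smul_mem g s = s ∧ treeAction hE.smul_mem g t = t}.Finite := by
  obtain ⟨e, he, ht⟩ := h
  refine (hE.finite_stabilizer e (he.isOrientation.subset he.mem)).subset ?_
  rintro g ⟨hs, hgt⟩
  have hs : g • s.1 = s.1 := congrArg Subtype.val hs
  have hgt : g • t.1 = t.1 := congrArg Subtype.val hgt
  have hst : s.1 \ t.1 = {e} := by
    rw [ht, Set.sdiff_sdiff_cancel_left (Set.singleton_subset_iff.2 he.mem)]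
  have : g • ({e} : Set (Set X)) = {e} := by
    rw [← hst, Set.smul_set_sdiff, hs, hgt]
  rwa [Set.smul_set_singleton, Set.singleton_eq_singleton_iff] at this

theorem finite_end_orbits : ∃ S : Set (TreeVertex E × TreeVertex E), S.Finite ∧
    ∀ s t, IsEnd s t → ∃ p ∈ S, ∃ g, treeAction hE.smul_mem g p.1 = s ∧
      treeAction hE.smul_mem g p.2 = t := by
  obtain ⟨F, hF, hFE⟩ := hE.finite_orbits
  refine ⟨Prod.map Subtype.val Subtype.val ⁻¹'
      (⋃ f ∈ F, (fun o => (o, o \ {f})) '' {o | Borders E o f}),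
    (hF.biUnion fun f _ => (Borders.finite_setOf hE.toIsTreeSet f).image _).preimage
      (Subtype.val_injective.prodMap Subtype.val_injective).injOn, ?_⟩
  rintro s t ⟨e, he, ht⟩
  obtain ⟨f, hf, g, rfl⟩ := hFE e (he.isOrientation.subset he.mem)
  have hb : Borders E (g⁻¹ • s.1) f := by simpa using he.smul hE.smul_mem g⁻¹
  refine ⟨(ofOrientation hb.isOrientation, midpoint hb), Set.mem_biUnion hf ⟨_, hb, rfl⟩, g,
    Subtype.ext (smul_inv_smul g s.1), Subtype.ext ?_⟩
  rw [treeAction_coe, ht]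
  exact (smul_sdiff_singleton g _ _).trans (by rw [smul_inv_smul])

theorem finite_vertex_orbits [Nonempty X] : ∃ S : Set (TreeVertex E), S.Finite ∧
    ∀ w, ∃ w' ∈ S, ∃ g, treeAction hE.smul_mem g w' = w := by
  obtain ⟨x⟩ := ‹Nonempty X›
  obtain ⟨S, hS, hSE⟩ := hE.finite_end_orbits
  refine ⟨insert (ofOrientation (hE.isOrientation x)) (Prod.fst '' S ∪ Prod.snd '' S),
    ((hS.image _).union (hS.image _)).insert _, ?_⟩
  rintro ⟨w, hw | ⟨o, e, he, rfl⟩⟩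
  · by_cases hx : w = {e ∈ E | x ∈ e}
    · exact ⟨_, Or.inl rfl, 1, by rw [map_one]; exact Subtype.ext hx.symm⟩
    · obtain ⟨e, he, -⟩ := hw.exists_borders hE.toIsTreeSet hx
      obtain ⟨p, hp, g, hg, -⟩ := hSE _ _ (isEnd_midpoint he)
      exact ⟨p.1, Or.inr (Or.inl ⟨p, hp, rfl⟩), g, hg⟩
  · obtain ⟨p, hp, g, -, hg⟩ := hSE _ _ (isEnd_midpoint he)
    exact ⟨p.2, Or.inr (Or.inr ⟨p, hp, rfl⟩), g, hg⟩

theorem smul_eq_or_smul_eq_compl (he : Borders E o e) {g : G} (hg : g • (o \ {e}) = o \ {e}) :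
    g • e = e ∨ g • e = eᶜ := by
  rw [smul_sdiff_singleton] at hg
  have hge := he.smul hE.smul_mem g
  by_contra! h
  have hgeE := hE.smul_mem g e (he.isOrientation.subset he.mem)
  by_cases hmem : g • e ∈ o
  · exact (hg.symm ▸ ⟨hmem, h.1⟩ : g • e ∈ g • o \ {g • e}).2 rfl
  · have hne : (g • e)ᶜ ≠ e := fun h' => h.2 (compl_eq_comm.1 h').symm
    have hmem' : (g • e)ᶜ ∈ o \ {e} := ⟨(he.isOrientation.compl_mem_iff _ hgeE).2 hmem, hne⟩
    exact hge.isOrientation.compl_notMem hge.mem (hg.symm ▸ hmem').1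

theorem finite_stabilizer_midpoint (he : Borders E o e) :
    {g | treeAction hE.smul_mem g (midpoint he) = midpoint he}.Finite := by
  have hst := hE.finite_stabilizer e (he.isOrientation.subset he.mem)
  exact (hst.union (finite_setOf_smul_eq_of_finite_stabilizer hst eᶜ)).subset fun g hg =>
    hE.smul_eq_or_smul_eq_compl he (congrArg Subtype.val hg)

theorem finite_stabilizer_of_forall_ne {w : TreeVertex E}
    (hw : ∀ o (ho : IsOrientation E o), ofOrientation ho ≠ w) :
    {g | treeAction hE.smul_mem g w = w}.Finite := by
  obtain ⟨w, ho | ⟨o, e, he, rfl⟩⟩ := w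
  · exact (hw w ho rfl).elim
  · exact hE.finite_stabilizer_midpoint he

theorem isCocompactTreeAction [Nonempty X] :
    IsCocompactTreeAction (treeOf E) (treeAction hE.smul_mem) where
  isTree := ⟨hE.treeOf_connected, hE.treeOf_isAcyclic⟩
  adj_iff := treeAction_adj_iff hE.smul_mem
  not_inversion g s t hst h := (treeOf_adj.1 hst).elim
    (fun hst => treeAction_ne_of_isEnd hE.smul_mem hst g h.1)
    fun hts => treeAction_ne_of_isEnd hE.smul_mem hts g h.2
  finite_vertex_orbits := hE.finite_vertex_orbits
  finite_edge_orbits := by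
    obtain ⟨S, hS, hSE⟩ := hE.finite_end_orbits
    refine ⟨S, hS, fun s t hst => ?_⟩
    rcases treeOf_adj.1 hst with h | h
    · obtain ⟨p, hp, g, hg⟩ := hSE s t h
      exact ⟨p, hp, g, Or.inl hg⟩
    · obtain ⟨p, hp, g, hg⟩ := hSE t s h
      exact ⟨p, hp, g, Or.inr hg⟩
  finite_edge_stabilizer s t hst := (treeOf_adj.1 hst).elim hE.finite_stabilizer_of_isEnd
    fun hts => (hE.finite_stabilizer_of_isEnd hts).subset fun _ hg => hg.symm

end IsCocompactTreeSet

/-- The translates of the members of `S` and of their complements. -/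
def translatesAndCompl (G : Type*) {X : Type*} [Group G] [MulAction G X] (S : Set (Set X)) :
    Set (Set X) :=
  {e | ∃ f ∈ S ∪ compl '' S, ∃ g : G, g • f = e}

theorem isCocompactTreeSet_translatesAndCompl {Y : Set (X × X)} {k : ℕ} {S : Set (Set X)}
    (hG : ∀ g : G, g • Y = Y) (hY : IsConnectedEdgeSet Y)
    (hst : ∀ p ∈ Y, {g : G | g • p = p}.Finite) (hS : S.Finite) (hSk : S ⊆ irreducibleBonds Y k) :
    IsCocompactTreeSet G (translatesAndCompl G S) := by
  have hSk' : S ∪ compl '' S ⊆ irreducibleBonds Y k :=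
    Set.union_subset hSk <| Set.image_subset_iff.2 fun f hf =>
      compl_mem_irreducibleBonds (hSk hf)
  have hEk : translatesAndCompl G S ⊆ irreducibleBonds Y k := by
    rintro e ⟨f, hf, g, rfl⟩
    exact smul_mem_irreducibleBonds hG (hSk' hf) g
  refine ⟨⟨fun e he => (hEk he).1.1.nonempty, ?_, fun c hc d hd =>
    not_crosses_of_mem_irreducibleBonds hY (hEk hc) (hEk hd), fun x y =>
    (finite_setOf_mem_irreducibleBonds hY x y).subset fun e he => ⟨hEk he.1, he.2⟩⟩, ?_,
    ⟨S ∪ compl '' S, hS.union (hS.image _), fun e he => he⟩, fun e he =>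
    finite_setOf_smul_eq_of_mem_irreducibleBonds hG hY hst (hEk he)⟩
  · rintro e ⟨f, hf, g, rfl⟩
    refine ⟨fᶜ, ?_, g, Set.smul_set_compl⟩
    rcases hf with hf | ⟨f, hf, rfl⟩
    · exact Or.inr ⟨f, hf, rfl⟩
    · exact Or.inl (by rwa [compl_compl])
  · rintro g e ⟨f, hf, g', rfl⟩
    exact ⟨f, hf, g * g', mul_smul g g' f⟩

theorem IsConnectedEdgeSet.exists_isCocompactTreeSet {Y : Set (X × X)} (hY : IsConnectedEdgeSet Y)
    (hG : ∀ g : G, g • Y = Y) (hst : ∀ p ∈ Y, {g : G | g • p = p}.Finite) {C : Set (Set X)}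
    (hC : C.Finite) (hCf : ∀ c ∈ C, (edgeBoundary Y c).Finite) :
    ∃ E : Set (Set X), IsCocompactTreeSet G E ∧ ∀ c ∈ C, Determines E c := by
  obtain ⟨k, hk⟩ := (hC.image fun c => (edgeBoundary Y c).ncard).bddAbove
  have hdet : ∀ c ∈ C, Determines (irreducibleBonds Y k) c := fun c hc =>
    determines_irreducibleBonds hY (hCf c hc) (hk ⟨c, hc, rfl⟩)
  choose! F hF hFf hFc using hdet
  refine ⟨translatesAndCompl G (⋃ c ∈ C, F c), isCocompactTreeSet_translatesAndCompl hG hY hst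
    (hC.biUnion hFf) (Set.iUnion₂_subset hF), fun c hc => ?_⟩
  exact ⟨F c, fun e he => ⟨e, Or.inl (Set.mem_biUnion hc he), 1, one_smul G e⟩, hFf c hc, hFc c hc⟩

end Action

section InfiniteOrder

variable {G X : Type*} [Group G] [MulAction G X]

theorem finite_setOf_zpow_smul_mem {g : G} (hg : ¬ IsOfFinOrder g) {x : X} {K : Set X}
    (hx : {h : G | h • x = x}.Finite) (hK : K.Finite) : {z : ℤ | g ^ z • x ∈ K}.Finite := by
  have : {z : ℤ | g ^ z • x ∈ K} = (fun z : ℤ => g ^ z) ⁻¹' ⋃ y ∈ K, {h : G | h • x = y} := by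
    ext z
    simp
  rw [this]
  exact (hK.biUnion fun y _ => finite_setOf_smul_eq_of_finite_stabilizer hx y).preimage
    (injective_zpow_iff_not_isOfFinOrder.2 hg).injOn

namespace IsCocompactTreeSet

variable {E o : Set (Set X)} {g : G} (hE : IsCocompactTreeSet G E) (ho : IsOrientation E o)
  (hg : ¬ IsOfFinOrder g) (hgo : g • o = o)
include hE ho hg hgo

theorem eventually_mem_zpow_smul_iff {e : Set X} (he : e ∈ E) (x : X) :
    ∀ᶠ z : ℤ in Filter.cofinite, (x ∈ g ^ z • e ↔ e ∈ o) := by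
  have mem_zpow_smul : ∀ z : ℤ, g ^ z • e ∈ o ↔ e ∈ o := fun z => by
    have hzo : g ^ z • o = o :=
      (MulAction.stabilizer G o).zpow_mem (MulAction.mem_stabilizer_iff.2 hgo) z
    conv_lhs => rw [← hzo]
    exact Set.smul_mem_smul_set_iff
  refine (finite_setOf_zpow_smul_mem hg (hE.finite_stabilizer e he)
    ((ho.finite x).union ((ho.finite x).image compl))).subset fun z hz => ?_
  have hz : ¬ (x ∈ g ^ z • e ↔ g ^ z • e ∈ o) := by rwa [mem_zpow_smul z]
  by_cases hzo : g ^ z • e ∈ o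
  · exact Or.inl ⟨hzo, fun hx => hz (iff_of_true hx hzo)⟩
  · exact Or.inr ⟨_, ⟨(ho.compl_mem_iff _ (hE.smul_mem _ e he)).2 hzo,
      fun hx => hz (iff_of_false hx hzo)⟩, compl_compl _⟩

theorem eq_sep_mem_of_smul_eq {x : X} (hgx : g • x = x) : o = {e ∈ E | x ∈ e} := by
  refine ho.eq_of_subset (hE.isOrientation x) fun e he => ⟨ho.subset he, ?_⟩
  obtain ⟨z, hz⟩ := (hE.eventually_mem_zpow_smul_iff ho hg hgo (ho.subset he) x).exists
  have hzx : (g ^ z)⁻¹ • x = x :=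
    inv_mem ((MulAction.stabilizer G x).zpow_mem (MulAction.mem_stabilizer_iff.2 hgx) z)
  rwa [← hz, Set.mem_smul_set_iff_inv_smul_mem, hzx] at he

theorem exists_pow_smul_mem_iff {c : Set X} (hc : Determines E c) (x : X) :
    ∃ n m : ℕ, g ^ (n + 1) • x ∈ c ↔ (g ^ (m + 1))⁻¹ • x ∈ c := by
  obtain ⟨F, hFE, hF, hFc⟩ := hc
  have hz : ∀ᶠ z : ℤ in Filter.cofinite, ∀ e ∈ F, (x ∈ g ^ z • e ↔ e ∈ o) :=
    (Filter.eventually_all_finite hF).2 fun e he =>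
      hE.eventually_mem_zpow_smul_iff ho hg hgo (hFE he) x
  have hpos : Function.Injective fun n : ℕ => ((n + 1 : ℕ) : ℤ) :=
    Nat.cast_injective.comp (add_left_injective 1)
  obtain ⟨n, hn⟩ := ((neg_injective.comp hpos).tendsto_cofinite.eventually hz).exists
  obtain ⟨m, hm⟩ := (hpos.tendsto_cofinite.eventually hz).exists
  refine ⟨n, m, hFc _ _ fun e he => ?_⟩
  have hn := hn e he
  have hm := hm e he
  simp only [Function.comp_apply, zpow_neg, zpow_natCast, Set.mem_smul_set_iff_inv_smul_mem,
    inv_inv] at hn hm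
  exact hn.trans hm.symm

end IsCocompactTreeSet

end InfiniteOrder

/-! ### Peripheral extensions and their coned-off Cayley graphs -/

/-- The set of translates of the peripheral subgroups `P i` under a group `G` acting on `A`. -/
def peripheralOrbit {A κ : Type*} [Group A] (P : κ → Subgroup A) (G : Type*) [Group G]
    [MulDistribMulAction G A] : SubMulAction G (Subgroup A) where
  carrier := {Q | ∃ i, ∃ g : G, Q = g • P i}
  smul_mem' := by
    rintro g _ ⟨i, h, rfl⟩
    exact ⟨i, g * h, by rw [mul_smul]⟩

/-- The peripheral subgroup `P i` as a cone point of the coned-off Cayley graph. -/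
def conePoint {A κ : Type*} [Group A] (P : κ → Subgroup A) (G : Type*) [Group G]
    [MulDistribMulAction G A] (i : κ) : peripheralOrbit P G :=
  ⟨P i, i, 1, (one_smul _ _).symm⟩

/-- The coned-off Cayley graph with respect to `S`: the group `G`, together with one cone point for
each translate of a peripheral subgroup. -/
def conedCayley {A κ : Type*} [Group A] (P : κ → Subgroup A) {G : Type*} [Group G]
    [MulDistribMulAction G A] (S : Set G) :
    Set ((G ⊕ peripheralOrbit P G) × (G ⊕ peripheralOrbit P G)) :=
  {p | ∃ g : G, (∃ s ∈ S, p = (Sum.inl g, Sum.inl (g * s))) ∨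
    ∃ i, p = (Sum.inl g, Sum.inr (g • conePoint P G i))}

/-- A group `G` acting on `A` and containing `A` with finite index, in such a way that `A` acts by
conjugation and `G` permutes the conjugates of the peripheral subgroups `P i`. -/
structure PeripheralExtension {A κ : Type*} [Group A] (P : κ → Subgroup A) (G : Type*) [Group G]
    [MulDistribMulAction G A] where
  /-- The inclusion of `A`. -/
  incl : A →* G
  incl_injective : Function.Injective incl
  finiteIndex_range : incl.range.FiniteIndex
  incl_smul : ∀ a b, incl a • b = a * b * a⁻¹
  exists_smul_eq : ∀ (g : G) i, ∃ j x, g • P i = incl x • P j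

section ConedCayley

variable {A κ G : Type*} [Group A] {P : κ → Subgroup A} [Group G] [MulDistribMulAction G A]
  {S : Set G}

theorem smul_mem_conedCayley {p : (G ⊕ peripheralOrbit P G) × (G ⊕ peripheralOrbit P G)}
    (hp : p ∈ conedCayley P S) (g : G) : g • p ∈ conedCayley P S := by
  obtain ⟨h, ⟨s, hs, rfl⟩ | ⟨i, rfl⟩⟩ := hp
  · exact ⟨g * h, Or.inl ⟨s, hs, by simp [mul_assoc]⟩⟩
  · exact ⟨g * h, Or.inr ⟨i, by simp [mul_smul]⟩⟩

theorem smul_conedCayley (g : G) : g • conedCayley P S = conedCayley P S := by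
  ext p
  rw [Set.mem_smul_set_iff_inv_smul_mem]
  exact ⟨fun hp => by simpa using smul_mem_conedCayley hp g, fun hp => smul_mem_conedCayley hp _⟩

theorem finite_stabilizer_of_mem_conedCayley :
    ∀ p ∈ conedCayley P S, {g : G | g • p = p}.Finite := by
  have stabilizer_trivial (h : G) (w : G ⊕ peripheralOrbit P G) :
      {g : G | g • ((Sum.inl h : G ⊕ peripheralOrbit P G), w) = (Sum.inl h, w)}.Finite :=
    (Set.finite_singleton 1).subset fun g hg => by simpa using congrArg Prod.fst hg
  rintro p ⟨g, ⟨s, -, rfl⟩ | ⟨i, rfl⟩⟩ <;> exact stabilizer_trivial _ _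

namespace PeripheralExtension

variable (M : PeripheralExtension P G)
include M

theorem incl_smul_eq_map (x : A) (K : Subgroup A) :
    M.incl x • K = K.map (MulAut.conj x).toMonoidHom := by
  ext b
  simp [Subgroup.mem_smul_pointwise_iff_exists, M.incl_smul]

theorem incl_smul_conePoint_of_mem {i : κ} {a : A} (ha : a ∈ P i) :
    M.incl a • conePoint P G i = conePoint P G i :=
  Subtype.ext ((M.incl_smul_eq_map a _).trans (Subgroup.conj_smul_eq_self_of_mem ha))

theorem exists_eq_smul_conePoint (Q : peripheralOrbit P G) :
    ∃ i x, Q = M.incl x • conePoint P G i := by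
  obtain ⟨Q, i, g, rfl⟩ := Q
  obtain ⟨j, x, h⟩ := M.exists_smul_eq g i
  exact ⟨j, x, Subtype.ext h⟩

theorem isConnectedEdgeSet_conedCayley
    (hS : Subgroup.closure S ⊔ ⨆ i, (P i).map M.incl = ⊤) :
    IsConnectedEdgeSet (conedCayley P S) := by
  intro c hc
  have mem_iff_of_edge : ∀ p ∈ conedCayley P S, (p.1 ∈ c ↔ p.2 ∈ c) := by
    intro p hp
    by_contra h
    exact (hc ▸ ⟨hp, h⟩ : p ∈ (∅ : Set _))
  have mem_iff_of_cone (g : G) (i : κ) : Sum.inl g ∈ c ↔ Sum.inr (g • conePoint P G i) ∈ c :=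
    mem_iff_of_edge _ ⟨g, Or.inr ⟨i, rfl⟩⟩
  let K : Subgroup G :=
    { carrier := {h | ∀ g, Sum.inl g ∈ c ↔ Sum.inl (g * h) ∈ c}
      mul_mem' := fun {x y} hx hy g => by rw [hx g, hy (g * x), mul_assoc]
      one_mem' := by simp
      inv_mem' := fun {x} hx g => by simpa using (hx (g * x⁻¹)).symm }
  have hK : ∀ h, h ∈ K := by
    refine (Subgroup.eq_top_iff' K).1 (top_le_iff.1 (hS ▸ sup_le ?_ (iSup_le fun i => ?_)))
    · exact (Subgroup.closure_le K).2 fun s hs g => mem_iff_of_edge _ ⟨g, Or.inl ⟨s, hs, rfl⟩⟩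
    · rintro _ ⟨a, ha, rfl⟩ g
      rw [mem_iff_of_cone g i, mem_iff_of_cone (g * _) i, mul_smul,
        M.incl_smul_conePoint_of_mem ha]
  have mem_iff_one : ∀ w, w ∈ c ↔ Sum.inl 1 ∈ c := by
    have mem_iff_one_inl (g : G) : Sum.inl g ∈ c ↔ Sum.inl 1 ∈ c := by
      simpa using (hK g 1).symm
    rintro (g | ⟨Q, i, g, rfl⟩)
    · exact mem_iff_one_inl g
    · exact (mem_iff_of_cone g i).symm.trans (mem_iff_one_inl g)
  by_cases h1 : Sum.inl 1 ∈ c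
  · exact Or.inr (Set.eq_univ_of_forall fun w => (mem_iff_one w).2 h1)
  · exact Or.inl (Set.eq_empty_of_forall_notMem fun w hw => h1 ((mem_iff_one w).1 hw))

end PeripheralExtension

end ConedCayley

namespace PeripheralExtension

variable {A κ G : Type*} [Group A] {P : κ → Subgroup A} [Group G] [MulDistribMulAction G A]
  (M : PeripheralExtension P G)

theorem isComplement_range : Subgroup.IsComplement (M.incl.range : Set G)
    (M.incl.range.exists_isComplement_right 1).choose :=
  (M.incl.range.exists_isComplement_right 1).choose_spec.1

/-- The `A`-component of an element, for a choice of representatives of the right cosets of `A`. -/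
noncomputable def proj (g : G) : A :=
  (MonoidHom.ofInjective M.incl_injective).symm (M.isComplement_range.equiv g).1

theorem incl_proj (g : G) : M.incl (M.proj g) = (M.isComplement_range.equiv g).1 := by
  rw [proj, ← MonoidHom.ofInjective_apply M.incl_injective, MulEquiv.apply_symm_apply]

theorem proj_incl_mul (a : A) (g : G) : M.proj (M.incl a * g) = a * M.proj g := by
  apply M.incl_injective
  rw [map_mul, incl_proj, incl_proj, M.isComplement_range.equiv_mul_left_of_mem ⟨a, rfl⟩]
  rfl

theorem finite_range_inv_incl_proj_mul :
    (Set.range fun g => (M.incl (M.proj g))⁻¹ * g).Finite := by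
  have := M.finiteIndex_range
  refine M.isComplement_range.finite_right.subset ?_
  rintro _ ⟨g, rfl⟩
  dsimp only
  rw [incl_proj, ← M.isComplement_range.equiv_snd_eq_inv_mul]
  exact Subtype.coe_prop _

theorem exists_incl_mul_mem_of_infinite {S : Set G} (hS : S.Infinite) :
    ∃ a ≠ 1, ∃ g ∈ S, M.incl a * g ∈ S := by
  obtain ⟨g, hg, h, hh, hne, heq⟩ := hS.exists_ne_map_eq_of_mapsTo
    (fun g _ => Set.mem_range_self g) M.finite_range_inv_incl_proj_mul
  refine ⟨M.proj h * (M.proj g)⁻¹, fun h1 => hne ?_, g, hg, ?_⟩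
  · rw [mul_inv_eq_one] at h1
    simpa [h1] using heq
  · rwa [map_mul, map_inv, mul_assoc, heq, mul_inv_cancel_left]

theorem exists_finite_forall_mem_conedCayley [Finite κ] {S : Set G} (hS : S.Finite) :
    ∃ Z : Set ((G ⊕ peripheralOrbit P G) × (G ⊕ peripheralOrbit P G)), Z.Finite ∧
      ∀ p ∈ conedCayley P S, ∃ z ∈ Z, ∃ a, M.incl a • z = p := by
  let R := Set.range fun g => (M.incl (M.proj g))⁻¹ * g
  have hR : R.Finite := M.finite_range_inv_incl_proj_mul
  refine ⟨Set.image2 (fun r s => (Sum.inl r, Sum.inl (r * s))) R S ∪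
      Set.image2 (fun r i => (Sum.inl r, Sum.inr (r • conePoint P G i))) R Set.univ,
    (hR.image2 _ hS).union (hR.image2 _ Set.finite_univ), ?_⟩
  rintro p ⟨g, ⟨s, hs, rfl⟩ | ⟨i, rfl⟩⟩
  · exact ⟨_, Or.inl ⟨_, ⟨g, rfl⟩, s, hs, rfl⟩, M.proj g, by simp [mul_assoc]⟩
  · exact ⟨_, Or.inr ⟨_, ⟨g, rfl⟩, i, trivial, rfl⟩, M.proj g, by simp [smul_smul]⟩

theorem exists_finite_closure_sup_eq_top {S : Set A} (hS : S.Finite)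
    (hSP : Subgroup.closure S ⊔ ⨆ i, P i = ⊤) :
    ∃ S' : Set G, S'.Finite ∧ Subgroup.closure S' ⊔ ⨆ i, (P i).map M.incl = ⊤ := by
  refine ⟨M.incl '' S ∪ Set.range fun g => (M.incl (M.proj g))⁻¹ * g,
    (hS.image _).union M.finite_range_inv_incl_proj_mul, (Subgroup.eq_top_iff' _).2 fun g => ?_⟩
  rw [Subgroup.closure_union, ← MonoidHom.map_closure, ← Subgroup.map_iSup, sup_right_comm,
    ← Subgroup.map_sup, hSP]
  have := Subgroup.mul_mem_sup (Subgroup.mem_map_of_mem M.incl (Subgroup.mem_top (M.proj g)))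
    (Subgroup.subset_closure (Set.mem_range_self (f := fun g => (M.incl (M.proj g))⁻¹ * g) g))
  rwa [mul_inv_cancel_left] at this

/-! ### The tree of a peripheral extension -/

/-- The extension to the coned-off Cayley graph of a set `c` of elements of `A`: a cone point
belongs to it if the corresponding subgroup meets `c` outside the identity. -/
def extend (c : Set A) : Set (G ⊕ peripheralOrbit P G) :=
  {w | Sum.elim (fun g => M.proj g ∈ c) (fun Q => ∃ p ∈ Q.1, p ≠ 1 ∧ p ∈ c) w}

theorem inl_mem_extend {c : Set A} {g : G} : Sum.inl g ∈ M.extend c ↔ M.proj g ∈ c := Iff.rfl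

theorem inr_mem_extend {c : Set A} (i : κ) (x : A) :
    Sum.inr (M.incl x • conePoint P G i) ∈ M.extend c ↔ x ∈ conjTrace c (P i) := by
  have : Sum.inr (M.incl x • conePoint P G i) ∈ M.extend c ↔
    ∃ p ∈ M.incl x • P i, p ≠ 1 ∧ p ∈ c := Iff.rfl
  rw [this, M.incl_smul_eq_map]
  simp [conjTrace]

variable {C : Set (Set A)} {E o : Set (Set (G ⊕ peripheralOrbit P G))}

theorem eventually_smul_mem_extend_iff (hC : IsSeparatingFamily P C) {c : Set A} (hc : c ∈ C)
    (w : G ⊕ peripheralOrbit P G) :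
    ∀ᶠ a in Filter.cofinite, (M.incl a • w ∈ M.extend c ↔ a ∈ c) := by
  rcases w with g | Q
  · simpa [inl_mem_extend, M.proj_incl_mul] using hC.eventually_mul_mem_iff c hc (M.proj g)
  · obtain ⟨i, x, rfl⟩ := M.exists_eq_smul_conePoint Q
    filter_upwards [hC.eventually_mul_mem_iff c hc x,
      (mul_left_injective x).tendsto_cofinite.eventually
        (hC.eventually_mem_conjTrace_iff c hc i)] with a hac hacP
    rw [Sum.smul_inr, smul_smul, ← map_mul, inr_mem_extend, hacP, hac]

theorem finite_edgeBoundary_extend [Finite κ] (hC : IsSeparatingFamily P C) {c : Set A}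
    (hc : c ∈ C) {S : Set G} (hS : S.Finite) :
    (edgeBoundary (conedCayley P S) (M.extend c)).Finite := by
  have hfin (v w : G ⊕ peripheralOrbit P G) :
      {a | ¬ (M.incl a • v ∈ M.extend c ↔ M.incl a • w ∈ M.extend c)}.Finite := by
    refine Filter.eventually_cofinite.1 ?_
    filter_upwards [M.eventually_smul_mem_extend_iff hC hc v,
      M.eventually_smul_mem_extend_iff hC hc w] with a hv hw
    rw [hv, hw]
  obtain ⟨Z, hZ, hZS⟩ := M.exists_finite_forall_mem_conedCayley hS
  refine (hZ.biUnion fun z _ => (hfin z.1 z.2).image fun a => M.incl a • z).subset ?_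
  rintro p ⟨hp, hpc⟩
  obtain ⟨z, hz, a, rfl⟩ := hZS p hp
  exact Set.mem_biUnion hz ⟨a, hpc, rfl⟩

theorem injective_sep_inr_mem (hC : IsSeparatingFamily P C) (hE : IsCocompactTreeSet G E)
    (hdet : ∀ c ∈ C, Determines E (M.extend c)) :
    Function.Injective fun Q : peripheralOrbit P G => {e ∈ E | Sum.inr Q ∈ e} := by
  intro Q Q' hQ
  obtain ⟨i, x, rfl⟩ := M.exists_eq_smul_conePoint Q
  obtain ⟨j, y, rfl⟩ := M.exists_eq_smul_conePoint Q'
  by_contra hne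
  obtain ⟨u, c, hc, hsep⟩ := hC.exists_separating_conjugates i j (x⁻¹ * y) fun h => hne <| by
    rw [← M.incl_smul_eq_map, map_mul, map_inv, mul_smul, eq_inv_smul_iff] at h
    exact Subtype.ext h
  refine hsep ?_
  rw [← M.inr_mem_extend, ← M.inr_mem_extend]
  refine (hdet c hc).iff_of_forall fun e he => ?_
  have htranslate := congrArg (M.incl (u⁻¹ * x⁻¹) • ·) hQ
  simp only [hE.smul_sep_mem, Sum.smul_inr, smul_smul, ← map_mul] at htranslate
  simpa [he, mul_assoc] using Set.ext_iff.1 htranslate e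

theorem exists_eq_sep_inr_mem_of_conj (hE : IsCocompactTreeSet G E)
    (hdet : ∀ c ∈ C, Determines E (M.extend c))
    (htf : ∀ i, ∀ a ∈ P i, ∀ k : ℕ, 0 < k → a ^ k = 1 → a = 1)
    (ho : IsOrientation E o) {a : A} (ha : a ≠ 1) (hao : M.incl a • o = o)
    (h : (∃ i, a ∈ P i) ∨ ∃ c ∈ C, ∀ n m : ℕ, ¬ (a ^ (n + 1) ∈ c ↔ (a ^ (m + 1))⁻¹ ∈ c)) :
    ∃ i, a ∈ P i ∧ o = {e ∈ E | Sum.inr (conePoint P G i) ∈ e} := by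
  rcases h with ⟨i, hi⟩ | ⟨c, hc, hsep⟩
  · have hord : ¬ IsOfFinOrder (M.incl a) := by
      rw [M.incl_injective.isOfFinOrder_iff, isOfFinOrder_iff_pow_eq_one]
      rintro ⟨k, hk, hak⟩
      exact ha (htf i a hi k hk hak)
    exact ⟨i, hi, hE.eq_sep_mem_of_smul_eq ho hord hao
      (congrArg Sum.inr (M.incl_smul_conePoint_of_mem hi))⟩
  · have hord : ¬ IsOfFinOrder (M.incl a) := by
      rw [M.incl_injective.isOfFinOrder_iff, isOfFinOrder_iff_pow_eq_one]
      rintro ⟨_ | k, hk, hak⟩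
      · exact hk.ne rfl
      · exact hsep k k (by rw [hak, inv_one])
    have hmem (b : A) : M.incl b • Sum.inl (M.incl (M.proj 1)⁻¹) ∈ M.extend c ↔ b ∈ c := by
      rw [Sum.smul_inl, smul_eq_mul, inl_mem_extend, ← mul_one (M.incl (M.proj 1)⁻¹),
        M.proj_incl_mul, M.proj_incl_mul, inv_mul_cancel, mul_one]
    obtain ⟨n, m, hnm⟩ := hE.exists_pow_smul_mem_iff ho hord hao (hdet c hc)
      (Sum.inl (M.incl (M.proj 1)⁻¹))
    rw [← map_pow, ← map_pow, ← map_inv, hmem, hmem] at hnm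
    exact (hsep n m hnm).elim

theorem exists_eq_sep_inr_mem (hC : IsSeparatingFamily P C) (hE : IsCocompactTreeSet G E)
    (hdet : ∀ c ∈ C, Determines E (M.extend c))
    (htf : ∀ i, ∀ a ∈ P i, ∀ k : ℕ, 0 < k → a ^ k = 1 → a = 1)
    (ho : IsOrientation E o) {a : A} (ha : a ≠ 1) (hao : M.incl a • o = o) :
    ∃ Q : peripheralOrbit P G, a ∈ Q.1 ∧ o = {e ∈ E | Sum.inr Q ∈ e} := by
  obtain ⟨u, hu⟩ := hC.exists_conj_mem_or_separating_powers a ha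
  have huo : M.incl (u⁻¹ * a * u) • (M.incl u)⁻¹ • o = (M.incl u)⁻¹ • o := by
    simp [mul_smul, hao]
  have hua : u⁻¹ * a * u ≠ 1 := by
    simpa [mul_assoc, inv_mul_eq_one] using ha
  obtain ⟨i, hi, hio⟩ := M.exists_eq_sep_inr_mem_of_conj hE hdet htf
    (ho.smul hE.smul_mem (M.incl u)⁻¹) hua huo hu
  refine ⟨M.incl u • conePoint P G i, ?_, ?_⟩
  · change a ∈ M.incl u • P i
    rw [M.incl_smul_eq_map]
    exact ⟨_, hi, by simp [mul_assoc]⟩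
  · rw [← Sum.smul_inr, ← hE.smul_sep_mem, ← hio, smul_inv_smul]

theorem exists_isCocompactTreeAction [Finite κ] (hC : IsSeparatingFamily P C)
    (htf : ∀ i, ∀ a ∈ P i, ∀ k : ℕ, 0 < k → a ^ k = 1 → a = 1)
    (hfg : ∃ S : Set A, S.Finite ∧ Subgroup.closure S ⊔ ⨆ i, P i = ⊤) :
    ∃ (E : Set (Set (G ⊕ peripheralOrbit P G))) (ρ : G →* Equiv.Perm (TreeVertex E)),
      IsCocompactTreeAction (treeOf E) ρ ∧ ∃ v : κ → TreeVertex E,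
        (∀ g i j, ρ g (v i) = v j ↔ g • P i = P j) ∧
        (∀ a i, ρ (M.incl a) (v i) = v i → a ∈ P i) ∧
        ∀ w, (∀ g i, ρ g (v i) ≠ w) → {g | ρ g w = w}.Finite := by
  obtain ⟨S₀, hS₀, hS₀P⟩ := hfg
  obtain ⟨S, hS, hSP⟩ := M.exists_finite_closure_sup_eq_top hS₀ hS₀P
  obtain ⟨E, hE, hdet⟩ := (M.isConnectedEdgeSet_conedCayley hSP).exists_isCocompactTreeSet
    smul_conedCayley finite_stabilizer_of_mem_conedCayley (hC.finite.image M.extend)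
    (Set.forall_mem_image.2 fun c hc => M.finite_edgeBoundary_extend hC hc hS)
  rw [Set.forall_mem_image] at hdet
  have hinj := M.injective_sep_inr_mem hC hE fun c hc => hdet hc
  refine ⟨E, treeAction hE.smul_mem, hE.isCocompactTreeAction, fun i =>
    TreeVertex.ofOrientation (hE.isOrientation (Sum.inr (conePoint P G i))), fun g i j => ?_,
    fun a i hai => ?_, fun w hw => ?_⟩
  · rw [treeAction_ofOrientation_eq_iff, hE.smul_sep_mem, Sum.smul_inr, hinj.eq_iff,
      Subtype.ext_iff]
    rfl
  · rw [treeAction_ofOrientation_eq_iff] at hai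
    by_cases ha : a = 1
    · exact ha ▸ one_mem _
    obtain ⟨Q, haQ, hQ⟩ :=
      M.exists_eq_sep_inr_mem hC hE (fun c hc => hdet hc) htf (hE.isOrientation _) ha hai
    obtain rfl := hinj hQ
    exact haQ
  · by_contra hinf
    obtain ⟨o, ho, rfl⟩ : ∃ o ho, TreeVertex.ofOrientation (o := o) ho = w := by
      by_contra! h
      exact hinf (hE.finite_stabilizer_of_forall_ne h)
    obtain ⟨a, ha, g, hg, hag⟩ := M.exists_incl_mul_mem_of_infinite hinf
    have hao : M.incl a • o = o := by
      rw [Set.mem_ofPred_eq, treeAction_ofOrientation_eq_iff] at hg hag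
      rwa [mul_smul, hg] at hag
    obtain ⟨Q, -, rfl⟩ := M.exists_eq_sep_inr_mem hC hE (fun c hc => hdet hc) htf ho ha hao
    obtain ⟨i, x, rfl⟩ := M.exists_eq_smul_conePoint Q
    exact hw (M.incl x) i ((treeAction_ofOrientation_eq_iff ..).2 (hE.smul_sep_mem ..))

end PeripheralExtension

/-! ### Refining a free factor by a basis -/

theorem countable_of_fg (G : Type*) [Group G] [Group.FG G] : Countable G := by
  obtain ⟨α, _, f, hf⟩ := Group.fg_iff_exists_freeGroup_hom_surjective_finite.1 ‹Group.FG G›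
  exact hf.countable

section FreeGroupBasis

variable (F : Type*) [Group F] [IsFreeGroup F]

theorem finite_freeGenerators [Group.FG F] : Finite (IsFreeGroup.Generators F) := by
  obtain ⟨S, hS, hSf⟩ := Group.fg_iff.1 ‹Group.FG F›
  have := hSf.to_subtype
  have : Finite (F →* Multiplicative (ZMod 2)) :=
    Finite.of_injective (fun f (s : S) => f s) fun f g h =>
      MonoidHom.eq_of_eqOn_dense hS fun s hs => congrFun h ⟨s, hs⟩
  have : Finite (IsFreeGroup.Generators F → Multiplicative (ZMod 2)) :=
    Finite.of_equiv _ IsFreeGroup.lift.symm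
  by_contra h
  rw [not_finite_iff_infinite] at h
  exact (Function.infinite_of_left (π := Multiplicative (ZMod 2))).not_finite this

theorem closure_range_freeGenerators :
    Subgroup.closure (Set.range (IsFreeGroup.of : IsFreeGroup.Generators F → F)) = ⊤ := by
  have h := congrArg (Subgroup.map (IsFreeGroup.mulEquiv F).toMonoidHom)
    (FreeGroup.closure_range_of (IsFreeGroup.Generators F))
  rw [MonoidHom.map_closure, ← Set.range_comp, Subgroup.map_top_of_surjective _
    (IsFreeGroup.mulEquiv F).surjective] at h
  exact h

variable {F}

theorem zpow_freeGenerator_injective (x : IsFreeGroup.Generators F) :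
    Function.Injective fun z : ℤ => IsFreeGroup.of x ^ z := by
  intro z w h
  simpa [← ofAdd_zsmul] using
    congrArg (IsFreeGroup.lift fun _ : IsFreeGroup.Generators F => Multiplicative.ofAdd (1 : ℤ)) h

end FreeGroupBasis

namespace IsInternalFreeProduct

open Monoid.CoprodI

variable {A ι : Type*} [Group A] {L : ι → Subgroup A}

theorem iSup_eq_top (hL : IsInternalFreeProduct L) : ⨆ i, L i = ⊤ := by
  simpa [range_eq_iSup] using MonoidHom.range_eq_top.2 hL.2

theorem fg [Finite ι] (hL : IsInternalFreeProduct L) (hfg : ∀ i, Group.FG (L i)) : Group.FG A := by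
  rw [Group.fg_def, ← hL.iSup_eq_top]
  exact Subgroup.FG.iSup _ fun i => (Group.fg_iff_subgroup_fg _).1 (hfg i)

theorem exists_lift (hL : IsInternalFreeProduct L) {N : Type*} [Group N] (f : ∀ i, L i →* N) :
    ∃ g : A →* N, ∀ i (m : L i), g m = f i m :=
  ⟨(lift f).comp hL.mulEquiv.symm.toMonoidHom, fun i m => by
    simp [← hL.mulEquiv_of m]⟩

theorem of_hom (hL : ⨆ i, L i = ⊤) (g : A →* Monoid.CoprodI fun i => L i)
    (hg : ∀ i (m : L i), g m = of (M := fun i => L i) m) : IsInternalFreeProduct L := by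
  have hcomp : g.comp (lift fun i => (L i).subtype) = MonoidHom.id _ :=
    ext_hom _ _ fun i => MonoidHom.ext fun m => by simp [hg]
  refine ⟨Function.LeftInverse.injective (g := g) (DFunLike.congr_fun hcomp), ?_⟩
  simpa [← MonoidHom.range_eq_top, range_eq_iSup] using hL

end IsInternalFreeProduct

section SplitBasis

open Monoid.CoprodI

variable {A κ : Type*} [Group A] {P : κ → Subgroup A} {B : Subgroup A}

/-- The family of the subgroups `P i` and the cyclic subgroups generated by the elements of a
basis of `B`. -/
noncomputable def splitBasis (P : κ → Subgroup A) (B : Subgroup A) [IsFreeGroup B] :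
    κ ⊕ IsFreeGroup.Generators B → Subgroup A :=
  Sum.elim P fun x => Subgroup.zpowers ((IsFreeGroup.of x : B) : A)

theorem closure_range_coe_freeGenerators [IsFreeGroup B] :
    Subgroup.closure (Set.range fun x : IsFreeGroup.Generators B => ((IsFreeGroup.of x : B) : A)) =
      B := by
  have h := congrArg (Subgroup.map B.subtype) (closure_range_freeGenerators B)
  rwa [MonoidHom.map_closure, ← Set.range_comp, ← MonoidHom.range_eq_map,
    Subgroup.range_subtype] at h

namespace IsInternalFreeProduct

variable (hL : IsInternalFreeProduct fun o : Option κ => o.elim B P)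
include hL

theorem closure_freeGenerators_sup_eq_top [IsFreeGroup B] :
    Subgroup.closure (Set.range fun x : IsFreeGroup.Generators B => ((IsFreeGroup.of x : B) : A)) ⊔
      ⨆ i, P i = ⊤ := by
  simpa [iSup_option, closure_range_coe_freeGenerators] using hL.iSup_eq_top

theorem iSup_splitBasis [IsFreeGroup B] : ⨆ s, splitBasis P B s = ⊤ := by
  rw [← hL.closure_freeGenerators_sup_eq_top, iSup_sum, sup_comm, ← Set.iUnion_singleton_eq_range,
    Subgroup.closure_iUnion]
  simp only [splitBasis, Sum.elim_inl, Sum.elim_inr, Subgroup.zpowers_eq_closure]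

theorem isInternalFreeProduct_splitBasis [IsFreeGroup B] :
    IsInternalFreeProduct (splitBasis P B) := by
  obtain ⟨g, hg⟩ := hL.exists_lift (N := Monoid.CoprodI fun s => splitBasis P B s) fun
    | none => IsFreeGroup.lift (G := B) fun x =>
        of (M := fun s => splitBasis P B s) (i := Sum.inr x) ⟨_, Subgroup.mem_zpowers _⟩
    | some i => of (M := fun s => splitBasis P B s) (i := Sum.inl i)
  have hgB (x : IsFreeGroup.Generators B) : g (IsFreeGroup.of x : B) =
      of (M := fun s => splitBasis P B s) (i := Sum.inr x) ⟨_, Subgroup.mem_zpowers _⟩ :=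
    (hg none (IsFreeGroup.of (G := B) x)).trans (IsFreeGroup.lift_of _ x)
  refine of_hom hL.iSup_splitBasis g ?_
  rintro (i | x)
  · exact hg (some i)
  · rintro ⟨_, z, rfl⟩
    exact ((map_zpow g _ z).trans (congrArg (· ^ z) (hgB x))).trans
      (map_zpow (of (M := fun s => splitBasis P B s) (i := Sum.inr x)) _ z).symm

end IsInternalFreeProduct

end SplitBasis

/-! ### Groups of automorphisms containing the inner automorphisms -/

section OuterAutomorphisms

variable {A κ H : Type*} [Group A] {P : κ → Subgroup A} [Group H]

instance isFiniteRelIndex_Inn_comap_toOut (R : Subgroup (OutG A)) [Finite R] :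
    (Inn A).IsFiniteRelIndex (R.comap (toOut A)) := by
  have hindex := (R.comap (toOut A)).relIndex_ker (toOut A)
  rw [QuotientGroup.ker_mk', Subgroup.map_comap_eq_self_of_surjective
    (QuotientGroup.mk'_surjective _)] at hindex
  exact Subgroup.isFiniteRelIndex_iff_relIndex_ne_zero.2 (hindex ▸ Nat.card_pos.ne')

theorem exists_peripheralExtension (hA : Function.Injective (MulAut.conj : A →* MulAut A))
    {Γ : Subgroup (MulAut A)} (hΓ : Inn A ≤ Γ) [(Inn A).IsFiniteRelIndex Γ]
    (hP : ∀ g ∈ Γ, ∀ i, ∃ j, ∃ x : A, g • P i = MulAut.conj x • P j) :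
    ∃ M : PeripheralExtension P Γ, ∀ a, (M.incl a : MulAut A) = MulAut.conj a := by
  have hrange : (MulAut.conj.codRestrict Γ fun a => hΓ ⟨a, rfl⟩).range = (Inn A).subgroupOf Γ := by
    ext g
    exact exists_congr fun a => Subtype.ext_iff
  exact ⟨{
    incl := MulAut.conj.codRestrict Γ fun a => hΓ ⟨a, rfl⟩
    incl_injective := fun a b h => hA (congrArg Subtype.val h)
    finiteIndex_range := hrange ▸ inferInstance
    incl_smul := fun a b => rfl
    exists_smul_eq := fun g => hP g g.2 }, fun a => rfl⟩

/-- Automorphisms representing `φ h` map each `P i` to a conjugate of `P (σ h i)`. -/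
def PermutesConjugacyClasses (φ : H →* OutG A) (σ : H →* Equiv.Perm κ) (P : κ → Subgroup A) :
    Prop :=
  ∀ (h : H) (i : κ) (ψ : MulAut A), toOut A ψ = φ h → ∃ x : A, ψ • P i = MulAut.conj x • P (σ h i)

theorem PermutesConjugacyClasses.apply_eq_iff {φ : H →* OutG A} {σ : H →* Equiv.Perm κ}
    (hσ : PermutesConjugacyClasses φ σ P) (hP : ∀ i j, ∀ x : A, P i = MulAut.conj x • P j → i = j)
    {h : H} {i j : κ} : σ h i = j ↔ ∃ ψ, toOut A ψ = φ h ∧ ψ • P i = P j := by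
  constructor
  · rintro rfl
    obtain ⟨ψ, hψ⟩ := QuotientGroup.mk'_surjective (Inn A) (φ h)
    obtain ⟨x, hx⟩ := hσ h i ψ hψ
    refine ⟨(MulAut.conj x)⁻¹ * ψ, ?_, by rw [mul_smul, hx, inv_smul_smul]⟩
    have hconj : toOut A (MulAut.conj x) = 1 := (QuotientGroup.eq_one_iff _).2 ⟨x, rfl⟩
    rw [map_mul, map_inv, hconj, inv_one, one_mul, hψ]
  · rintro ⟨ψ, hψ, hij⟩
    obtain ⟨x, hx⟩ := hσ h i ψ hψ
    exact (hP j _ x (hij.symm.trans hx)).symm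

end OuterAutomorphisms

/-- `i` is the smallest index in its orbit. -/
def IsMinimalIndex {H κ : Type*} [Group H] [LE κ] (σ : H →* Equiv.Perm κ) (i : κ) : Prop :=
  ∀ h, i ≤ σ h i

section MinimalIndex

variable {H κ : Type*} [Group H] {σ : H →* Equiv.Perm κ}

theorem IsMinimalIndex.eq_of_apply_eq [PartialOrder κ] {i j : κ} (hi : IsMinimalIndex σ i)
    (hj : IsMinimalIndex σ j) {h : H} (hij : σ h i = j) : i = j := by
  refine le_antisymm (hij ▸ hi h) ((hj h⁻¹).trans_eq ?_)
  simp [← hij]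

theorem exists_isMinimalIndex_apply [LinearOrder κ] [WellFoundedLT κ] (i : κ) :
    ∃ h, IsMinimalIndex σ (σ h i) := by
  obtain ⟨_, ⟨h, rfl⟩, hmin⟩ := wellFounded_lt.has_min (Set.range fun h => σ h i) ⟨_, 1, rfl⟩
  exact ⟨h, fun k => not_lt.1 (hmin _ ⟨k * h, by simp⟩)⟩

end MinimalIndex

theorem IsInternalFreeProduct.exists_isCocompactTreeAction.{w} {A κ : Type*} [Group A]
    [Small.{w} A] [Finite κ] {P : κ → Subgroup A} {B : Subgroup A} [Group.FG B] [IsFreeGroup B]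
    (hL : IsInternalFreeProduct fun o : Option κ => o.elim B P) (hP : ∀ i, P i ≠ ⊥)
    (hA : Function.Injective (MulAut.conj : A →* MulAut A))
    (htf : ∀ i, ∀ a ∈ P i, ∀ k : ℕ, 0 < k → a ^ k = 1 → a = 1)
    {Γ : Subgroup (MulAut A)} (hΓ : Inn A ≤ Γ) [(Inn A).IsFiniteRelIndex Γ]
    (hΓP : ∀ g ∈ Γ, ∀ i, ∃ j, ∃ x : A, g • P i = MulAut.conj x • P j) :
    ∃ (W : Type w) (T : SimpleGraph W) (ρ : Γ →* Equiv.Perm W),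
      IsCocompactTreeAction T ρ ∧ ∃ v : κ → W,
        (∀ g i j, ρ g (v i) = v j ↔ g • P i = P j) ∧
        (∀ (g : Γ) a i, (g : MulAut A) = MulAut.conj a → ρ g (v i) = v i → a ∈ P i) ∧
        ∀ w, (∀ g i, ρ g (v i) ≠ w) → {g | ρ g w = w}.Finite := by
  have := finite_freeGenerators B
  have hC := hL.isInternalFreeProduct_splitBasis.isSeparatingFamily hP
    (fun x => Subtype.val_injective.comp (zpow_freeGenerator_injective x)) fun _ => rfl
  obtain ⟨M, hM⟩ := exists_peripheralExtension hA hΓ hΓP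
  obtain ⟨E, ρ, hρ, v, hv, hvA, hother⟩ := M.exists_isCocompactTreeAction hC htf
    ⟨_, Set.finite_range _, hL.closure_freeGenerators_sup_eq_top⟩
  have : Small.{w} Γ :=
    small_of_injective (DFunLike.coe_injective.comp Subtype.val_injective : Function.Injective
      fun (g : Γ) (a : A) => (g : MulAut A) a)
  have := hρ.small.{w}
  let e := equivShrink.{w} (TreeVertex E)
  refine ⟨_, _, _, hρ.congr e, e ∘ v, ?_, ?_, e.forall_congr_right.1 fun w hw => ?_⟩
  · exact fun g i j => Iff.trans (by simp) (hv g i j)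
  · intro g a i hg hgi
    obtain rfl : g = M.incl a := Subtype.ext (hg.trans (hM a).symm)
    exact hvA a i (by simpa using hgi)
  · simpa using hother w (by simpa using hw)

theorem relative_KPS_general.{w} {A : Type*} [Group A] [Small.{w} A] {n : ℕ}
    (Ai : Fin n → Subgroup A) (B : Subgroup A)
    (hiso : Function.Bijective
      (Monoid.CoprodI.lift (fun o : Option (Fin n) => (o.elim B Ai).subtype)))
    (hnontriv : ∃ o₁ o₂ : Option (Fin n), o₁ ≠ o₂ ∧ o₁.elim B Ai ≠ ⊥ ∧ o₂.elim B Ai ≠ ⊥)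
    (hAnontriv : ∀ i, Ai i ≠ ⊥) (htf : ∀ i, ∀ a ∈ Ai i, ∀ k : ℕ, 0 < k → a ^ k = 1 → a = 1)
    (hfgB : Group.FG B) (hBfree : IsFreeGroup B) {H : Type*} [Group H] (φ : H →* OutG A)
    [Finite φ.range] (σ : H →* Equiv.Perm (Fin n)) (hσ : PermutesConjugacyClasses φ σ Ai)
    (m : ℕ) (hm : m ≤ n) (hmin : ∀ i : Fin n, (i : ℕ) < m ↔ IsMinimalIndex σ i)
    (Abar : Subgroup (MulAut A)) (hAbar : Abar = φ.range.comap (toOut A)) :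
    ∃ (W : Type w) (T : SimpleGraph W) (ρ : Abar →* Equiv.Perm W),
      IsCocompactTreeAction T ρ ∧ ∃ v : Fin m → W,
        (∀ i j, i ≠ j → ∀ g, ρ g (v i) ≠ v j) ∧
        (∀ i,
          (∀ g : Abar, (∃ a ∈ Ai (Fin.castLE hm i), (g : MulAut A) = MulAut.conj a) →
            ρ g (v i) = v i) ∧
          (∀ (g : Abar) (a : A), (g : MulAut A) = MulAut.conj a →
            ρ g (v i) = v i → a ∈ Ai (Fin.castLE hm i)) ∧
          {h | σ h (Fin.castLE hm i) = Fin.castLE hm i} =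
            {h | ∃ g : Abar, ρ g (v i) = v i ∧ toOut A (g : MulAut A) = φ h}) ∧
        ∀ w, (∀ i g, ρ g (v i) ≠ w) → {g | ρ g w = w}.Finite := by
  have hL : IsInternalFreeProduct fun o : Option (Fin n) => o.elim B Ai := hiso
  have : Nontrivial {o : Option (Fin n) // o.elim B Ai ≠ ⊥} := by
    obtain ⟨o₁, o₂, ho, h₁, h₂⟩ := hnontriv
    exact ⟨⟨o₁, h₁⟩, ⟨o₂, h₂⟩, Subtype.coe_ne_coe.1 ho⟩
  have hrep (g : Abar) : ∃ h, φ h = toOut A g := hAbar.le g.2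
  have : (Inn A).IsFiniteRelIndex Abar := hAbar ▸ inferInstance
  have hInn : Inn A ≤ Abar := hAbar ▸
    (QuotientGroup.ker_mk' (Inn A)).ge.trans (MonoidHom.ker_le_comap _ _)
  obtain ⟨W, T, ρ, hT, v, hv, hvA, hother⟩ :=
    hL.exists_isCocompactTreeAction hAnontriv hL.conj_injective htf hInn fun g hg i =>
      have ⟨h, hh⟩ := hrep ⟨g, hg⟩
      ⟨_, hσ h i g hh.symm⟩
  have hσv (h : H) (i j : Fin n) :
      σ h i = j ↔ ∃ g : Abar, ρ g (v i) = v j ∧ toOut A (g : MulAut A) = φ h := by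
    rw [hσ.apply_eq_iff fun i j x hij => Option.some_injective _
      (hL.eq_of_eq_map_conj (i := some i) (hAnontriv j) hij)]
    constructor
    · rintro ⟨ψ, hψ, hij⟩
      exact ⟨⟨ψ, hAbar.ge ⟨h, hψ.symm⟩⟩, (hv _ _ _).2 hij, hψ⟩
    · rintro ⟨g, hij, hg⟩
      exact ⟨g, hg, (hv _ _ _).1 hij⟩
  refine ⟨W, T, ρ, hT, fun i => v (Fin.castLE hm i), fun i j hij g hg => ?_, fun i => ⟨?_, ?_, ?_⟩,
    fun w hw => hother w ?_⟩
  · obtain ⟨h, hh⟩ := hrep g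
    exact hij (Fin.castLE_injective hm (((hmin (Fin.castLE hm i)).1 i.2).eq_of_apply_eq
      ((hmin _).1 j.2) ((hσv h _ _).2 ⟨g, hg, hh.symm⟩)))
  · rintro g ⟨a, ha, hg⟩
    exact (hv _ _ _).2 ((congrArg (· • Ai _) hg).trans (Subgroup.conj_smul_eq_self_of_mem ha))
  · exact fun g a => hvA g a _
  · exact Set.ext fun h => hσv h _ _
  · rintro g j rfl
    obtain ⟨h, hh⟩ := exists_isMinimalIndex_apply (σ := σ) j
    obtain ⟨g', hg', -⟩ := (hσv h j _).1 rfl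
    refine hw ⟨_, (hmin _).2 hh⟩ (g * g'⁻¹) ?_
    rw [map_mul, Equiv.Perm.mul_apply, map_inv]
    exact congrArg _ (Equiv.Perm.inv_eq_iff_eq.2 hg'.symm)

/-- The relative Karrass–Pietrowski–Solitar theorem.  Given a free product
decomposition `A = A₁ ∗ ⋯ ∗ Aₙ ∗ B` preserved by a monomorphism `φ : H → Out(A)`
from a finite group, with each `Aᵢ` finitely generated, nontrivial and
torsion-free and `B` a finitely generated free group, the extension `Ā`
(the preimage of `φ(H)` in `Aut(A)`) acts cocompactly and without inversions on
a tree with finite edge stabilisers, so that the minimal factors `A₁, …, A_m`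
are realised (up to the induced extension by `Stab_H(i)`) as vertex stabilisers
of distinguished vertices, all other vertex stabilisers being finite. -/
theorem relative_KPS
    {A : Type*} [Group A] {n : ℕ} (Ai : Fin n → Subgroup A) (B : Subgroup A)
    -- `A = A₁ ∗ ⋯ ∗ Aₙ ∗ B` :
    (hiso : Function.Bijective
      (Monoid.CoprodI.lift (fun o : Option (Fin n) => (o.elim B Ai).subtype)))
    -- at least two nontrivial factors :
    (hnontriv : ∃ o₁ o₂ : Option (Fin n), o₁ ≠ o₂ ∧
      o₁.elim B Ai ≠ ⊥ ∧ o₂.elim B Ai ≠ ⊥)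
    -- each `Aᵢ` is finitely generated, nontrivial and torsion-free :
    (hfgA : ∀ i, Group.FG (Ai i)) (hAnontriv : ∀ i, Ai i ≠ ⊥)
    (htf : ∀ i, ∀ a ∈ Ai i, ∀ k : ℕ, 0 < k → a ^ k = 1 → a = 1)
    -- `B` is a (possibly trivial) finitely generated free group :
    (hfgB : Group.FG B) (hBfree : IsFreeGroup B)
    -- `φ : H → Out(A)` a monomorphism with finite domain :
    {H : Type*} [Group H] [Finite H] (φ : H →* OutG A)
    (hφ : Function.Injective φ)
    -- the decomposition is preserved by `H`, with induced action `σ` on indices :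
    (σ : H →* Equiv.Perm (Fin n))
    (hσ : ∀ (h : H) (i : Fin n), ∀ ψ : MulAut A, toOut A ψ = φ h →
      ∃ x : A, (Ai i).map ψ.toMonoidHom = (Ai (σ h i)).map (MulAut.conj x).toMonoidHom)
    -- `A₁, …, A_m` are the minimal factors :
    (m : ℕ) (hm : m ≤ n)
    (hmin : ∀ i : Fin n, (i : ℕ) < m ↔ ∀ h : H, (i : ℕ) ≤ ((σ h i : Fin n) : ℕ))
    -- `Ā`, the preimage of `φ(H)` in `Aut(A)` :
    (Abar : Subgroup (MulAut A)) (hAbar : Abar = Subgroup.comap (toOut A) φ.range) :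
    ∃ (W : Type) (T : SimpleGraph W) (ρ : Abar →* Equiv.Perm W),
      -- `T` is a tree and `Ā` acts on it by graph automorphisms
      T.IsTree ∧
      (∀ (g : Abar) (u v : W), T.Adj (ρ g u) (ρ g v) ↔ T.Adj u v) ∧
      -- without inversions
      (∀ (g : Abar) (u v : W), T.Adj u v → ¬(ρ g u = v ∧ ρ g v = u)) ∧
      -- finitely many orbits of vertices
      (∃ s : Set W, s.Finite ∧ ∀ w : W, ∃ w' ∈ s, ∃ g : Abar, ρ g w' = w) ∧
      -- finitely many orbits of edges
      (∃ s : Set (W × W), s.Finite ∧ ∀ u v : W, T.Adj u v →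
        ∃ p ∈ s, ∃ g : Abar, (ρ g p.1 = u ∧ ρ g p.2 = v) ∨ (ρ g p.1 = v ∧ ρ g p.2 = u)) ∧
      -- finite edge stabilisers
      (∀ u v : W, T.Adj u v → {g : Abar | ρ g u = u ∧ ρ g v = v}.Finite) ∧
      -- distinguished vertices `v₁, …, v_m`
      ∃ v : Fin m → W,
        -- lying in pairwise distinct `Ā`-orbits
        (∀ i j : Fin m, i ≠ j → ∀ g : Abar, ρ g (v i) ≠ v j) ∧
        (∀ i : Fin m,
          -- `Stab_Ā(vᵢ)` contains `Aᵢ` (embedded via `A ≅ Inn(A)`) :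
          (∀ g : Abar, (∃ a ∈ Ai (Fin.castLE hm i), (g : MulAut A) = MulAut.conj a) →
            ρ g (v i) = v i) ∧
          -- `Stab_Ā(vᵢ) ∩ A = Aᵢ` :
          (∀ (g : Abar) (a : A), (g : MulAut A) = MulAut.conj a →
            ρ g (v i) = v i → a ∈ Ai (Fin.castLE hm i)) ∧
          -- the image of `Stab_Ā(vᵢ)` in `H` is `Stab_H(i)` :
          ({h : H | σ h (Fin.castLE hm i) = Fin.castLE hm i} =
            {h : H | ∃ g : Abar, ρ g (v i) = v i ∧ toOut A (g : MulAut A) = φ h})) ∧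
        -- every vertex outside the orbits of the `vᵢ` has finite stabiliser
        (∀ w : W, (∀ (i : Fin m) (g : Abar), ρ g (v i) ≠ w) →
          {g : Abar | ρ g w = w}.Finite) := by
  have := IsInternalFreeProduct.fg hiso (Option.rec hfgB hfgA)
  have := countable_of_fg A
  have := Finite.of_surjective φ.rangeRestrict φ.rangeRestrict_surjective
  obtain ⟨W, T, ρ, hT, hv⟩ := relative_KPS_general.{0} Ai B hiso hnontriv hAnontriv htf hfgB hBfree
    φ σ hσ m hm hmin Abar hAbar
  exact ⟨W, T, ρ, hT.isTree, hT.adj_iff, hT.not_inversion, hT.finite_vertex_orbits,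
    hT.finite_edge_orbits, hT.finite_edge_stabilizer, hv⟩
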